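/- arXiv:2108.12220 — 3 statements merged into one kernel-verified Lean document; each statement's English description precedes it below -/
import Mathlib

section
/- Let μ ∈ ℝ, set α := −iμ/2, and let u : ℝ → ℂ be a smooth solution of the PII equation u''(x) = x·u(x) + 2·u(x)³ − α on ℝ, taking purely imaginary values on ℝ and satisfying the asymptotic expansion (A−): there exist d ∈ iℝ, φ ∈ ℝ and x₀, K > 0 such that |u(x) − α/x − d·(−x)^{−1/4}·sin( (2/3)(−x)^{3/2} − (3/4)·d²·ln(−x) + φ )| ≤ K·(−x)^{−7/4} for all x ≤ −x₀. Define w(x) := ∫₀ˣ exp( (2/3^{1/3}) ∫₀^y u(z/3^{1/3}) dz ) dy − C with C := (2·3^{1/3}/(1−iμ))·(u'(0) − u(0)²), v(x) := (2/3^{1/3})·u(x/3^{1/3}), g(x) := e^{iμ·ln|x|}·w(x)/x for x ≠ 0, and let g₋ := lim_{x→−∞} g(x) (which exists). Then ∫_{−∞}^{x} y^{−2}·w'(y)·e^{iμ·ln|y|}·v(y)² dy = (2/3)·(1−iμ)·g₋·(2d²/√3)·(−x)^{−3/2} + O((−x)^{−3}) as x → −∞. -/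
/-- The real cube root of 3. -/
noncomputable def cbrt3 : ℝ := (3 : ℝ) ^ ((1:ℝ)/3)

/-!
With `ν = iμ`, the function `v` solves `v'' = x v / 3 + v³ / 2 + ν / 3` and `w'' = v w'`, so
`(1 - ν) w - (x - 3 v' + 3 v² / 2) w'` is constant, and `C` is the constant of integration that
makes it vanish. Put `t = -x > 0` and `V t = v (-t)`, `H t = e^{ν ln t} w' (-t)`, `Γ t = g (-t)`.
Then `H' = -H (V - ν/t)`, and `V - ν/t` is oscillating of order `t^{-1/4}` with phase of order
`t^{3/2}`: its integral converges, hence `H` is bounded. Dividing by `t`, the first integral becomes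
`H = (1 - ν) Γ + 3 H V' / t + 3 H V² / (2 t)`.

Since `H V^k V'` is a derivative up to smaller terms, it costs nothing that the hypothesis does not
control `V'`. A first use of the relation, in `Γ' = (H - (1 - ν) Γ) / t`, gives
`Γ - g₋ = O(t^{-3/2})`; a second one replaces `H` by `(1 - ν) g₋` in the integrand `t^{-2} H V²`.
In `V²` the mean `1/2` of `sin²` yields the leading term, and everything else integrates to
`O(t^{-3})` by oscillation or size.
-/

open Filter Topology Asymptotics MeasureTheory

/-! ### Orders of decay -/

/-- The scale `ϱ t = t^{-1/4}` for `t → ∞`. Every power of `t` in the argument is a natural power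
of `ϱ t`, so that exponents are added as natural numbers. -/
noncomputable def invFourthRoot (t : ℝ) : ℝ := t ^ (-(1 : ℝ) / 4)

local notation "ϱ" => invFourthRoot

lemma invFourthRoot_pos {t : ℝ} (ht : 0 < t) : 0 < ϱ t := Real.rpow_pos_of_pos ht _

lemma invFourthRoot_le_one {t : ℝ} (ht : 1 ≤ t) : ϱ t ≤ 1 :=
  Real.rpow_le_one_of_one_le_of_nonpos ht (by norm_num)

lemma invFourthRoot_le_of_le {s t : ℝ} (ht : 0 < t) (h : t ≤ s) : ϱ s ≤ ϱ t :=
  Real.rpow_le_rpow_of_nonpos ht h (by norm_num)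

lemma invFourthRoot_pow {t : ℝ} (ht : 0 < t) (n : ℕ) : ϱ t ^ n = t ^ (-(n : ℝ) / 4) := by
  rw [invFourthRoot, ← Real.rpow_natCast, ← Real.rpow_mul ht.le]
  congr 1
  ring

lemma invFourthRoot_pow_four {t : ℝ} (ht : 0 < t) : ϱ t ^ 4 = t⁻¹ := by
  rw [invFourthRoot_pow ht, ← Real.rpow_neg_one]
  norm_num

lemma ofReal_invFourthRoot_pow_four {t : ℝ} (ht : 0 < t) : (ϱ t : ℂ) ^ 4 = (t : ℂ)⁻¹ :=
  mod_cast invFourthRoot_pow_four ht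

lemma hasDerivAt_invFourthRoot_pow {t : ℝ} (ht : 0 < t) (n : ℕ) :
    HasDerivAt (fun s => ϱ s ^ n) (-(n / 4) * ϱ t ^ (n + 4)) t := by
  have h : HasDerivAt (fun s : ℝ => s ^ (-(n : ℝ) / 4)) (-(n / 4) * ϱ t ^ (n + 4)) t := by
    refine (Real.hasDerivAt_rpow_const (Or.inl ht.ne')).congr_deriv ?_
    rw [invFourthRoot_pow ht, neg_div]
    congr 2
    push_cast
    ring
  refine h.congr_of_eventuallyEq ?_
  filter_upwards [Ioi_mem_nhds ht] with s hs using invFourthRoot_pow hs n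

lemma hasDerivAt_ofReal_invFourthRoot_pow {t : ℝ} (ht : 0 < t) (n : ℕ) :
    HasDerivAt (fun s => (ϱ s : ℂ) ^ n) (-(n / 4) * (ϱ t : ℂ) ^ (n + 4)) t := by
  have h := (hasDerivAt_invFourthRoot_pow ht n).ofReal_comp
  push_cast at h
  exact h

lemma tendsto_invFourthRoot_atTop : Tendsto ϱ atTop (𝓝 0) := by
  refine (tendsto_rpow_neg_atTop (y := (1 : ℝ) / 4) (by norm_num)).congr fun t => ?_
  rw [invFourthRoot, neg_div]

/-- `DecayOrder n f` means `f t = O(t^{-n/4})` as `t → ∞`. -/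
def DecayOrder {E : Type*} [Norm E] (n : ℕ) (f : ℝ → E) : Prop :=
  f =O[atTop] fun t => ϱ t ^ n

namespace DecayOrder

section NormedGroup
variable {E : Type*} [NormedAddCommGroup E] {m n : ℕ} {f g : ℝ → E}

lemma of_bound {C : ℝ} (h : ∀ᶠ t in atTop, ‖f t‖ ≤ C * ϱ t ^ n) : DecayOrder n f := by
  refine IsBigO.of_bound C ?_
  filter_upwards [h, eventually_gt_atTop 0] with t h ht
  rwa [Real.norm_of_nonneg (pow_pos (invFourthRoot_pos ht) n).le]

lemma exists_bound (hf : DecayOrder n f) :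
    ∃ C > 0, ∀ᶠ t in atTop, ‖f t‖ ≤ C * ϱ t ^ n := by
  obtain ⟨C, hC, h⟩ := IsBigO.exists_pos hf
  refine ⟨C, hC, ?_⟩
  filter_upwards [h.bound, eventually_gt_atTop 0] with t h ht
  rwa [Real.norm_of_nonneg (pow_pos (invFourthRoot_pos ht) n).le] at h

lemma congr' (hf : DecayOrder n f) (h : f =ᶠ[atTop] g) : DecayOrder n g :=
  IsBigO.congr' hf h EventuallyEq.rfl

lemma add (hf : DecayOrder n f) (hg : DecayOrder n g) : DecayOrder n (fun t => f t + g t) :=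
  IsBigO.add hf hg

lemma sub (hf : DecayOrder n f) (hg : DecayOrder n g) : DecayOrder n (fun t => f t - g t) :=
  IsBigO.sub hf hg

lemma mono (hf : DecayOrder m f) (h : n ≤ m) : DecayOrder n f := by
  refine IsBigO.trans hf (IsBigO.of_bound 1 ?_)
  filter_upwards [eventually_ge_atTop 1] with t ht
  have h0 := invFourthRoot_pos (one_pos.trans_le ht)
  rw [Real.norm_of_nonneg (by positivity), Real.norm_of_nonneg (by positivity), one_mul]
  exact pow_le_pow_of_le_one h0.le (invFourthRoot_le_one ht) h

lemma tendsto_zero (hf : DecayOrder n f) (hn : n ≠ 0) : Tendsto f atTop (𝓝 0) := by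
  refine IsBigO.trans_tendsto hf ?_
  simpa [hn] using tendsto_invFourthRoot_atTop.pow n

lemma integrableOn_Ioi (hf : DecayOrder n f) (hn : 5 ≤ n) {T : ℝ}
    (hc : ContinuousOn f (Set.Ici T)) : IntegrableOn f (Set.Ioi T) := by
  have hdom : f =O[atTop] fun t : ℝ => t ^ (-(5 : ℝ) / 4) := by
    refine IsBigO.congr' (hf.mono hn) EventuallyEq.rfl ?_
    filter_upwards [eventually_gt_atTop 0] with t ht
    simpa using invFourthRoot_pow ht 5
  have hint : IntegrableOn f (Set.Ici T) :=
    (hc.locallyIntegrableOn measurableSet_Ici).integrableOn_of_isBigO_atTop hdom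
      ⟨Set.Ioi 1, Ioi_mem_atTop 1, integrableOn_Ioi_rpow_of_lt (by norm_num) one_pos⟩
  exact hint.mono_set Set.Ioi_subset_Ici_self

end NormedGroup

section NormedRing
variable {R : Type*} [NormedRing R] {m n : ℕ} {f g : ℝ → R}

lemma mul (hf : DecayOrder m f) (hg : DecayOrder n g) :
    DecayOrder (m + n) (fun t => f t * g t) := by
  simpa only [DecayOrder, pow_add] using IsBigO.mul hf hg

lemma const_mul (hf : DecayOrder n f) (c : R) : DecayOrder n (fun t => c * f t) :=
  IsBigO.const_mul_left hf c

lemma pow [NormOneClass R] (hf : DecayOrder m f) (k : ℕ) :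
    DecayOrder (m * k) (fun t => f t ^ k) := by
  simpa only [DecayOrder, pow_mul] using IsBigO.pow hf k

end NormedRing

lemma ofReal_invFourthRoot_pow (n : ℕ) : DecayOrder n (fun t => (ϱ t : ℂ) ^ n) :=
  of_bound (C := 1) <| by
    filter_upwards [eventually_gt_atTop 0] with t ht
    rw [norm_pow, Complex.norm_real, Real.norm_of_nonneg (invFourthRoot_pos ht).le, one_mul]

lemma ofReal_sin (θ : ℝ → ℝ) : DecayOrder 0 (fun t => (Real.sin (θ t) : ℂ)) :=
  of_bound (C := 1) <| .of_forall fun t => by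
    simpa only [Complex.norm_real, Real.norm_eq_abs, pow_zero, mul_one]
      using Real.abs_sin_le_one (θ t)

lemma ofReal_cos (θ : ℝ → ℝ) : DecayOrder 0 (fun t => (Real.cos (θ t) : ℂ)) :=
  of_bound (C := 1) <| .of_forall fun t => by
    simpa only [Complex.norm_real, Real.norm_eq_abs, pow_zero, mul_one]
      using Real.abs_cos_le_one (θ t)

lemma cexp {f : ℝ → ℂ} (hf : DecayOrder 0 f) : DecayOrder 0 (fun t => Complex.exp (f t)) := by
  obtain ⟨C, -, hC⟩ := hf.exists_bound
  refine of_bound (C := Real.exp C) ?_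
  filter_upwards [hC] with t ht
  rw [pow_zero, mul_one] at ht ⊢
  exact (Complex.norm_exp_le_exp_norm _).trans (Real.exp_le_exp.2 ht)

end DecayOrder

section Primitives
variable {E : Type*} [NormedAddCommGroup E] [NormedSpace ℝ E] {m n : ℕ}

lemma norm_sub_le_of_norm_deriv_le_invFourthRoot_pow (hn : n ≠ 0) {C T : ℝ} (hT : 0 < T)
    {F F' : ℝ → E} (hF : ∀ t ≥ T, HasDerivAt F (F' t) t)
    (hF' : ∀ t ≥ T, ‖F' t‖ ≤ C * ϱ t ^ (n + 4)) {s : ℝ} (hs : T ≤ s) :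
    ‖F s - F T‖ ≤ C * (4 / n) * ϱ T ^ n := by
  have hC : 0 ≤ C := nonneg_of_mul_nonneg_left ((norm_nonneg _).trans (hF' T le_rfl))
    (pow_pos (invFourthRoot_pos hT) _)
  have hB : ∀ t ≥ T, HasDerivAt (fun r => C * (4 / n) * (ϱ T ^ n - ϱ r ^ n))
      (C * ϱ t ^ (n + 4)) t := fun t ht => by
    refine (((hasDerivAt_invFourthRoot_pow (hT.trans_le ht) n).const_sub _).const_mul
      _).congr_deriv ?_
    field_simp
  have hle : ‖F s - F T‖ ≤ C * (4 / n) * (ϱ T ^ n - ϱ s ^ n) :=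
    image_norm_le_of_norm_deriv_right_le_deriv_boundary' (f := fun t => F t - F T)
      (fun t ht => ((hF t ht.1).sub_const _).continuousAt.continuousWithinAt)
      (fun t ht => ((hF t ht.1).sub_const _).hasDerivWithinAt) (by simp)
      (fun t ht => (hB t ht.1).continuousAt.continuousWithinAt)
      (fun t ht => (hB t ht.1).hasDerivWithinAt) (fun t ht => hF' t ht.1) ⟨hs, le_rfl⟩
  have hpos : 0 ≤ ϱ s ^ n := (pow_pos (invFourthRoot_pos (hT.trans_le hs)) n).le
  refine hle.trans (mul_le_mul_of_nonneg_left ?_ (by positivity))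
  linarith

/-- `HasDecayingPrimitive n f` means that `f` is, up to `O(t^{-n/4-1})`, the derivative of a
function that is `O(t^{-n/4})`: the integral of `f` over `(T, ∞)` is then `O(T^{-n/4})`, even where
`f` itself decays no faster than that because it oscillates. -/
def HasDecayingPrimitive (n : ℕ) (f : ℝ → E) : Prop :=
  ∃ G G' : ℝ → E, (∀ t > 0, HasDerivAt G (G' t) t) ∧ DecayOrder n G ∧
    DecayOrder (n + 4) (fun t => f t - G' t)

lemma DecayOrder.hasDecayingPrimitive {f : ℝ → E} (hf : DecayOrder (n + 4) f) :
    HasDecayingPrimitive n f :=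
  ⟨0, 0, fun t _ => hasDerivAt_const t 0, isBigO_zero _ _, by simpa using hf⟩

namespace HasDecayingPrimitive
variable {f g F : ℝ → E}

lemma congr' (hf : HasDecayingPrimitive n f) (h : f =ᶠ[atTop] g) : HasDecayingPrimitive n g := by
  obtain ⟨G, G', hG, hGn, hfG⟩ := hf
  exact ⟨G, G', hG, hGn, hfG.congr' (h.mono fun t ht => by simp only [ht])⟩

lemma mono (hf : HasDecayingPrimitive m f) (h : n ≤ m) : HasDecayingPrimitive n f := by
  obtain ⟨G, G', hG, hGn, hfG⟩ := hf
  exact ⟨G, G', hG, hGn.mono h, hfG.mono (by lia)⟩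

lemma add (hf : HasDecayingPrimitive n f) (hg : HasDecayingPrimitive n g) :
    HasDecayingPrimitive n (fun t => f t + g t) := by
  obtain ⟨G, G', hG, hGn, hfG⟩ := hf
  obtain ⟨H, H', hH, hHn, hgH⟩ := hg
  refine ⟨fun t => G t + H t, fun t => G' t + H' t, fun t ht => (hG t ht).add (hH t ht),
    hGn.add hHn, (hfG.add hgH).congr' (.of_forall fun t => ?_)⟩
  exact sub_add_sub_comm _ _ _ _

lemma const_mul {R : Type*} [NormedRing R] [NormedAlgebra ℝ R] {f : ℝ → R}
    (hf : HasDecayingPrimitive n f) (c : R) : HasDecayingPrimitive n (fun t => c * f t) := by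
  obtain ⟨G, G', hG, hGn, hfG⟩ := hf
  exact ⟨fun t => c * G t, fun t => c * G' t, fun t ht => (hG t ht).const_mul c,
    hGn.const_mul c, (hfG.const_mul c).congr' (.of_forall fun t => mul_sub _ _ _)⟩

lemma exists_norm_sub_le (hf : HasDecayingPrimitive n f) (hn : n ≠ 0)
    (hF : ∀ t > 0, HasDerivAt F (f t) t) :
    ∃ C > 0, ∀ᶠ T in atTop, ∀ s ≥ T, ‖F s - F T‖ ≤ C * ϱ T ^ n := by
  obtain ⟨G, G', hG, hGn, hfG⟩ := hf
  obtain ⟨C, hC0, hC⟩ := hGn.exists_bound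
  obtain ⟨C', hC'0, hC'⟩ := hfG.exists_bound
  refine ⟨C' * (4 / n) + (C + C), by positivity, ?_⟩
  filter_upwards [eventually_forall_ge_atTop.2 hC, eventually_forall_ge_atTop.2 hC',
    eventually_gt_atTop 0] with T hGT hfGT hT s hs
  have hdiff : ‖(F s - G s) - (F T - G T)‖ ≤ C' * (4 / n) * ϱ T ^ n :=
    norm_sub_le_of_norm_deriv_le_invFourthRoot_pow hn hT (F := fun t => F t - G t)
      (fun t ht => (hF t (hT.trans_le ht)).sub (hG t (hT.trans_le ht))) hfGT hs
  have hGs : ‖G s‖ ≤ C * ϱ T ^ n := (hGT s hs).trans <| by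
    have := invFourthRoot_pos (hT.trans_le hs)
    gcongr
    exact invFourthRoot_le_of_le hT hs
  calc ‖F s - F T‖ = ‖((F s - G s) - (F T - G T)) + (G s - G T)‖ := by congr 1; abel
    _ ≤ C' * (4 / n) * ϱ T ^ n + (C * ϱ T ^ n + C * ϱ T ^ n) :=
        norm_add_le_of_le hdiff (norm_sub_le_of_le hGs (hGT T le_rfl))
    _ = (C' * (4 / n) + (C + C)) * ϱ T ^ n := by ring

lemma decayOrder_zero_of_hasDerivAt (hf : HasDecayingPrimitive n f) (hn : n ≠ 0)
    (hF : ∀ t > 0, HasDerivAt F (f t) t) : DecayOrder 0 F := by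
  obtain ⟨C, -, hC⟩ := hf.exists_norm_sub_le hn hF
  obtain ⟨T, hT⟩ := hC.exists
  refine DecayOrder.of_bound (C := C * ϱ T ^ n + ‖F T‖) ?_
  filter_upwards [eventually_ge_atTop T] with s hs
  rw [pow_zero, mul_one]
  exact (norm_le_norm_sub_add _ _).trans (by gcongr; exact hT s hs)

lemma decayOrder_sub_of_tendsto (hf : HasDecayingPrimitive n f) (hn : n ≠ 0)
    (hF : ∀ t > 0, HasDerivAt F (f t) t) {L : E} (hL : Tendsto F atTop (𝓝 L)) :
    DecayOrder n (fun t => F t - L) := by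
  obtain ⟨C, -, hC⟩ := hf.exists_norm_sub_le hn hF
  refine DecayOrder.of_bound (C := C) ?_
  filter_upwards [hC] with T hT
  rw [norm_sub_rev]
  refine le_of_tendsto (hL.sub_const (F T)).norm ?_
  filter_upwards [eventually_ge_atTop T] with s hs using hT s hs

end HasDecayingPrimitive

lemma hasDerivAt_integral_Ioi [CompleteSpace E] {f : ℝ → E} {a t : ℝ}
    (hf : IntegrableOn f (Set.Ioi a)) (hc : ContinuousOn f (Set.Ioi a)) (ht : a < t) :
    HasDerivAt (fun s => ∫ y in Set.Ioi s, f y) (-f t) t := by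
  have hint : ∀ s > a, IntervalIntegrable f volume a s := fun s hs =>
    (intervalIntegrable_iff_integrableOn_Ioc_of_le hs.le).2
      (hf.mono_set Set.Ioc_subset_Ioi_self)
  have hD : HasDerivAt (fun s => ∫ y in a..s, f y) (f t) t :=
    intervalIntegral.integral_hasDerivAt_right (hint t ht)
      (hc.stronglyMeasurableAtFilter isOpen_Ioi _ ht) (hc.continuousAt (Ioi_mem_nhds ht))
  refine (hD.const_sub (∫ y in Set.Ioi a, f y)).congr_of_eventuallyEq ?_
  filter_upwards [Ioi_mem_nhds ht] with s hs
  rw [eq_sub_iff_add_eq', intervalIntegral.integral_interval_add_Ioi hf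
    (hf.mono_set (Set.Ioi_subset_Ioi hs.le))]

end Primitives

/-! ### Oscillating expansions -/

/-- A phase `Θ` with `Θ' = κ t^{1/2} + β/t`, as in the expansions of Painlevé II transcendents. -/
def IsPhase (κ β : ℝ) (Θ : ℝ → ℝ) : Prop :=
  ∀ t > 0, HasDerivAt Θ (κ * (ϱ t ^ 2)⁻¹ + β * ϱ t ^ 4) t

namespace IsPhase
variable {κ β : ℝ} {Θ : ℝ → ℝ}

lemma add_const (hΘ : IsPhase κ β Θ) (c : ℝ) : IsPhase κ β (fun t => Θ t + c) :=
  fun t ht => (hΘ t ht).add_const c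

lemma const_mul (hΘ : IsPhase κ β Θ) (c : ℝ) : IsPhase (c * κ) (c * β) (fun t => c * Θ t) :=
  fun t ht => ((hΘ t ht).const_mul c).congr_deriv (by ring)

lemma hasDerivAt_pow_mul_sin (hΘ : IsPhase κ β Θ) (m : ℕ) {t : ℝ} (ht : 0 < t) :
    HasDerivAt (fun s => ϱ s ^ (m + 2) * Real.sin (Θ s))
      (κ * (ϱ t ^ m * Real.cos (Θ t)) +
        ϱ t ^ (m + 6) * (β * Real.cos (Θ t) - (m + 2) / 4 * Real.sin (Θ t))) t := by
  refine ((hasDerivAt_invFourthRoot_pow ht (m + 2)).mul (hΘ t ht).sin).congr_deriv ?_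
  have := (invFourthRoot_pos ht).ne'
  field_simp
  push_cast
  ring

lemma hasDecayingPrimitive_cos (hΘ : IsPhase κ β Θ) (hκ : κ ≠ 0) (m : ℕ) :
    HasDecayingPrimitive (m + 2) (fun t => (ϱ t : ℂ) ^ m * (Real.cos (Θ t) : ℂ)) := by
  have hκ' : (κ : ℂ) ≠ 0 := mod_cast hκ
  refine ⟨fun t => (κ : ℂ)⁻¹ * ((ϱ t : ℂ) ^ (m + 2) * (Real.sin (Θ t) : ℂ)),
    fun t => (κ : ℂ)⁻¹ * (κ * ((ϱ t : ℂ) ^ m * (Real.cos (Θ t) : ℂ)) + (ϱ t : ℂ) ^ (m + 6) *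
      (β * (Real.cos (Θ t) : ℂ) - (m + 2) / 4 * (Real.sin (Θ t) : ℂ))), fun t ht => ?_, ?_, ?_⟩
  · simpa only [Complex.ofReal_mul, Complex.ofReal_pow, Complex.ofReal_add, Complex.ofReal_sub,
      Complex.ofReal_div, Complex.ofReal_natCast, Complex.ofReal_ofNat] using
      (hΘ.hasDerivAt_pow_mul_sin m ht).ofReal_comp.const_mul (κ : ℂ)⁻¹
  · exact ((DecayOrder.ofReal_invFourthRoot_pow _).mul (.ofReal_sin Θ)).const_mul _
  · refine (((DecayOrder.ofReal_invFourthRoot_pow (m + 6)).mul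
      (((DecayOrder.ofReal_cos Θ).const_mul (β : ℂ)).sub
        ((DecayOrder.ofReal_sin Θ).const_mul ((m + 2) / 4 : ℂ)))).const_mul
          (-(κ : ℂ)⁻¹)).congr' (.of_forall fun t => ?_)
    field_simp
    ring

lemma hasDecayingPrimitive_sin (hΘ : IsPhase κ β Θ) (hκ : κ ≠ 0) (m : ℕ) :
    HasDecayingPrimitive (m + 2) (fun t => (ϱ t : ℂ) ^ m * (Real.sin (Θ t) : ℂ)) := by
  simpa only [← sub_eq_add_neg, Real.cos_sub_pi_div_two] using
    (hΘ.add_const (-(Real.pi / 2))).hasDecayingPrimitive_cos hκ m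

end IsPhase

/-- `V t = ν/t + a t^{-1/4} sin (Θ t) + O(t^{-7/4})` as `t → ∞`. -/
def HasOscillatingExpansion (ν a : ℂ) (Θ : ℝ → ℝ) (V : ℝ → ℂ) : Prop :=
  DecayOrder 7 (fun t => V t - (ν * (ϱ t : ℂ) ^ 4 + a * ((ϱ t : ℂ) * (Real.sin (Θ t) : ℂ))))

namespace HasOscillatingExpansion
variable {ν a : ℂ} {κ β : ℝ} {Θ : ℝ → ℝ} {V : ℝ → ℂ}

lemma decayOrder_leading (ν a : ℂ) (Θ : ℝ → ℝ) :
    DecayOrder 1 (fun t => ν * (ϱ t : ℂ) ^ 4 + a * ((ϱ t : ℂ) * (Real.sin (Θ t) : ℂ))) := by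
  have hϱ : DecayOrder 1 (fun t => (ϱ t : ℂ)) := by
    simpa only [pow_one] using DecayOrder.ofReal_invFourthRoot_pow 1
  exact (((DecayOrder.ofReal_invFourthRoot_pow 4).const_mul ν).mono (by norm_num)).add
    ((hϱ.mul (.ofReal_sin Θ)).const_mul a)

lemma decayOrder_one (hV : HasOscillatingExpansion ν a Θ V) : DecayOrder 1 V :=
  ((hV.mono (by norm_num)).add (decayOrder_leading ν a Θ)).congr'
    (.of_forall fun _ => sub_add_cancel _ _)

lemma decayOrder_sq_sub (hV : HasOscillatingExpansion ν a Θ V) :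
    DecayOrder 8 (fun t => V t ^ 2 - (a ^ 2 * ((ϱ t : ℂ) ^ 2 * (Real.sin (Θ t) : ℂ) ^ 2) +
      2 * ν * a * ((ϱ t : ℂ) ^ 5 * (Real.sin (Θ t) : ℂ)))) :=
  ((hV.mul (hV.decayOrder_one.add (decayOrder_leading ν a Θ))).add
    ((DecayOrder.ofReal_invFourthRoot_pow 8).const_mul (ν ^ 2))).congr'
      (.of_forall fun t => by ring)

lemma hasDecayingPrimitive_sub (hV : HasOscillatingExpansion ν a Θ V) (hΘ : IsPhase κ β Θ)
    (hκ : κ ≠ 0) : HasDecayingPrimitive 3 (fun t => V t - ν * (ϱ t : ℂ) ^ 4) :=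
  ((DecayOrder.hasDecayingPrimitive (n := 3) hV).add
    ((hΘ.hasDecayingPrimitive_sin hκ 1).const_mul a)).congr' (.of_forall fun t => by ring)

/-- The mean of `sin²` gives the term `a²/2`; the rest oscillates. -/
lemma hasDecayingPrimitive_sq_sub (hV : HasOscillatingExpansion ν a Θ V) (hΘ : IsPhase κ β Θ)
    (hκ : κ ≠ 0) : HasDecayingPrimitive 12
      (fun t => (ϱ t : ℂ) ^ 8 * V t ^ 2 - a ^ 2 / 2 * (ϱ t : ℂ) ^ 10) := by
  have hcos := (hΘ.const_mul 2).hasDecayingPrimitive_cos (mul_ne_zero two_ne_zero hκ) 10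
  have hsin := (hΘ.hasDecayingPrimitive_sin hκ 13).mono (show 12 ≤ 13 + 2 by norm_num)
  have hrem : HasDecayingPrimitive 12 _ :=
    ((DecayOrder.ofReal_invFourthRoot_pow 8).mul hV.decayOrder_sq_sub).hasDecayingPrimitive
  refine ((hrem.add (hcos.const_mul (-(a ^ 2 / 2)))).add
    (hsin.const_mul (2 * ν * a))).congr' (.of_forall fun t => ?_)
  have hdouble : (Real.cos (2 * Θ t) : ℂ) = 1 - 2 * (Real.sin (Θ t) : ℂ) ^ 2 := by
    rw [Real.cos_two_mul, Real.cos_sq']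
    push_cast
    ring
  simp only [hdouble]
  ring

end HasOscillatingExpansion

/-! ### The system on the half-line `t = -x > 0` -/

/-- The relations satisfied by `V t = v (-t)`, `H t = e^{ν ln t} w' (-t)` and `Γ t = g (-t)`, where
`ν = iμ`. The last one expresses `w` through `w'`, `v` and `v'`. -/
structure ReflectedSystem (ν : ℂ) (V H Γ : ℝ → ℂ) : Prop where
  differentiableAt : ∀ t > 0, DifferentiableAt ℝ V t
  hasDerivAt_weight : ∀ t > 0, HasDerivAt H (-(H t * (V t - ν * (ϱ t : ℂ) ^ 4))) t
  hasDerivAt_quotient : ∀ t > 0, HasDerivAt Γ ((H t - (1 - ν) * Γ t) * (ϱ t : ℂ) ^ 4) t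
  quotient_eq : ∀ t > 0,
    (1 - ν) * Γ t = H t * (1 - (3 * deriv V t + 3 / 2 * V t ^ 2) * (ϱ t : ℂ) ^ 4)

namespace ReflectedSystem
variable {ν a γ : ℂ} {κ β : ℝ} {Θ : ℝ → ℝ} {V H Γ : ℝ → ℂ}

/-- Since `V ^ k * V'` is a derivative and `H' = -H * (V - ν/t)` is small, no bound on `V'` is
needed. -/
lemma hasDecayingPrimitive_mul_deriv (S : ReflectedSystem ν V H Γ) (hH : DecayOrder 0 H)
    (hV : DecayOrder 1 V) {k m n : ℕ} (hn : n + 2 ≤ m + k) :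
    HasDecayingPrimitive n (fun t => (ϱ t : ℂ) ^ m * (H t * (V t ^ k * deriv V t))) := by
  have hk : (k + 1 : ℂ) ≠ 0 := Nat.cast_add_one_ne_zero k
  have hϱ := DecayOrder.ofReal_invFourthRoot_pow
  refine ⟨fun t => (k + 1 : ℂ)⁻¹ * ((ϱ t : ℂ) ^ m * (H t * V t ^ (k + 1))),
    fun t => (ϱ t : ℂ) ^ m * (H t * (V t ^ k * deriv V t)) - (k + 1 : ℂ)⁻¹ *
      ((ϱ t : ℂ) ^ m * (H t * V t ^ (k + 2)) +
        (m / 4 - ν) * ((ϱ t : ℂ) ^ (m + 4) * (H t * V t ^ (k + 1)))), fun t ht => ?_, ?_, ?_⟩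
  · refine (((hasDerivAt_ofReal_invFourthRoot_pow ht m).mul ((S.hasDerivAt_weight t ht).mul
      ((S.differentiableAt t ht).hasDerivAt.pow (k + 1)))).const_mul _).congr_deriv ?_
    simp only [Pi.mul_apply, Pi.pow_apply, Nat.add_sub_cancel]
    push_cast
    field_simp
    ring
  · exact (((hϱ m).mul (hH.mul (hV.pow (k + 1)))).const_mul _).mono (by lia)
  · have hrem := ((((hϱ m).mul (hH.mul (hV.pow (k + 2)))).mono
        (show n + 4 ≤ _ by lia)).add ((((hϱ (m + 4)).mul
          (hH.mul (hV.pow (k + 1)))).const_mul (m / 4 - ν : ℂ)).mono (by lia))).const_mul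
            (k + 1 : ℂ)⁻¹
    exact hrem.congr' (.of_forall fun t => (sub_sub_cancel _ _).symm)

lemma decayOrder_quotient_sub (S : ReflectedSystem ν V H Γ) (hH : DecayOrder 0 H)
    (hV : DecayOrder 1 V) (hΓ : Tendsto Γ atTop (𝓝 γ)) : DecayOrder 6 (fun t => Γ t - γ) := by
  have hderiv := S.hasDecayingPrimitive_mul_deriv hH hV (k := 0) (m := 8) (n := 6) (by norm_num)
  have hsq : HasDecayingPrimitive 6 (fun t => (ϱ t : ℂ) ^ 8 * (H t * V t ^ 2)) :=
    ((DecayOrder.ofReal_invFourthRoot_pow 8).mul (hH.mul (hV.pow 2))).hasDecayingPrimitive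
  refine ((hderiv.const_mul 3).add (hsq.const_mul (3 / 2))).decayOrder_sub_of_tendsto
    (by norm_num) (fun t ht => (S.hasDerivAt_quotient t ht).congr_deriv ?_) hΓ
  rw [S.quotient_eq t ht]
  ring

lemma hasDecayingPrimitive_integrand_sub (S : ReflectedSystem ν V H Γ) (hH : DecayOrder 0 H)
    (hV : HasOscillatingExpansion ν a Θ V) (hΘ : IsPhase κ β Θ) (hκ : κ ≠ 0)
    (hΓ : Tendsto Γ atTop (𝓝 γ)) :
    HasDecayingPrimitive 12
      (fun t => (ϱ t : ℂ) ^ 8 * H t * V t ^ 2 - (1 - ν) * γ * (a ^ 2 / 2) * (ϱ t : ℂ) ^ 10) := by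
  have hV1 := hV.decayOrder_one
  have hϱ := DecayOrder.ofReal_invFourthRoot_pow
  have hmain := (hV.hasDecayingPrimitive_sq_sub hΘ hκ).const_mul ((1 - ν) * γ)
  have hquot : HasDecayingPrimitive 12
      (fun t => (1 - ν) * ((Γ t - γ) * ((ϱ t : ℂ) ^ 8 * V t ^ 2))) :=
    (((S.decayOrder_quotient_sub hH hV1 hΓ).mul
      ((hϱ 8).mul (hV1.pow 2))).const_mul _).hasDecayingPrimitive
  have hderiv := (S.hasDecayingPrimitive_mul_deriv hH hV1 (k := 2) (m := 12) (n := 12)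
    (by norm_num)).const_mul 3
  have hquartic : HasDecayingPrimitive 12
      (fun t => 3 / 2 * ((ϱ t : ℂ) ^ 12 * (H t * V t ^ 4))) :=
    (((hϱ 12).mul (hH.mul (hV1.pow 4))).const_mul _).hasDecayingPrimitive
  refine (((hmain.add hquot).add hderiv).add hquartic).congr' ?_
  filter_upwards [eventually_gt_atTop 0] with t ht
  linear_combination (ϱ t : ℂ) ^ 8 * V t ^ 2 * S.quotient_eq t ht

lemma continuousAt_integrand (S : ReflectedSystem ν V H Γ) {t : ℝ} (ht : 0 < t) :
    ContinuousAt (fun t => (ϱ t : ℂ) ^ 8 * H t * V t ^ 2) t :=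
  ((hasDerivAt_ofReal_invFourthRoot_pow ht 8).continuousAt.mul
    (S.hasDerivAt_weight t ht).continuousAt).mul ((S.differentiableAt t ht).continuousAt.pow 2)

lemma integrableOn_integrand (S : ReflectedSystem ν V H Γ) (hH : DecayOrder 0 H)
    (hV : DecayOrder 1 V) {T : ℝ} (hT : 0 < T) :
    IntegrableOn (fun t => (ϱ t : ℂ) ^ 8 * H t * V t ^ 2) (Set.Ioi T) := by
  have ho : DecayOrder 10 (fun t => (ϱ t : ℂ) ^ 8 * H t * V t ^ 2) :=
    ((DecayOrder.ofReal_invFourthRoot_pow 8).mul hH).mul (hV.pow 2)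
  exact ho.integrableOn_Ioi (by norm_num) fun t ht =>
    (S.continuousAt_integrand (hT.trans_le ht)).continuousWithinAt

theorem decayOrder_integral_Ioi_sub (S : ReflectedSystem ν V H Γ) (hH : DecayOrder 0 H)
    (hV : HasOscillatingExpansion ν a Θ V) (hΘ : IsPhase κ β Θ) (hκ : κ ≠ 0)
    (hΓ : Tendsto Γ atTop (𝓝 γ)) :
    DecayOrder 12 (fun T => (∫ t in Set.Ioi T, (ϱ t : ℂ) ^ 8 * H t * V t ^ 2) -
      (1 - ν) * γ * (a ^ 2 / 3) * (ϱ T : ℂ) ^ 6) := by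
  have hlim : Tendsto (fun T => (∫ t in Set.Ioi T, (ϱ t : ℂ) ^ 8 * H t * V t ^ 2) -
      (1 - ν) * γ * (a ^ 2 / 3) * (ϱ T : ℂ) ^ 6) atTop (𝓝 0) := by
    simpa using (tendsto_integral_Ioi_zero tendsto_id).sub
      (((DecayOrder.ofReal_invFourthRoot_pow 6).const_mul
        ((1 - ν) * γ * (a ^ 2 / 3))).tendsto_zero (by norm_num))
  have hmain := (S.hasDecayingPrimitive_integrand_sub hH hV hΘ hκ hΓ).const_mul (-1)
  refine (hmain.decayOrder_sub_of_tendsto (by norm_num) (fun t ht => ?_) hlim).congr'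
    (.of_forall fun _ => sub_zero _)
  have hint := hasDerivAt_integral_Ioi (S.integrableOn_integrand hH hV.decayOrder_one
    (half_pos ht)) (fun s hs => (S.continuousAt_integrand
      ((half_pos ht).trans hs)).continuousWithinAt) (half_lt_self ht)
  refine (hint.sub ((hasDerivAt_ofReal_invFourthRoot_pow ht 6).const_mul _)).congr_deriv ?_
  push_cast
  ring

end ReflectedSystem

/-! ### Rescaled Painlevé II -/

/-- The function `exp (∫₀ˣ v)`, which is `w'` in the theorem. -/
noncomputable def expIntegral (v : ℝ → ℂ) (x : ℝ) : ℂ := Complex.exp (∫ y in (0 : ℝ)..x, v y)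

lemma expIntegral_zero (v : ℝ → ℂ) : expIntegral v 0 = 1 := by simp [expIntegral]

lemma hasDerivAt_expIntegral {v : ℝ → ℂ} (hv : Continuous v) (x : ℝ) :
    HasDerivAt (expIntegral v) (v x * expIntegral v x) x :=
  (hv.integral_hasStrictDerivAt 0 x).hasDerivAt.cexp.congr_deriv (mul_comm _ _)

/-- The form `v'' = x v / 3 + v³ / 2 + ν / 3` of Painlevé II with `α = -ν / 2`, solved by
`v x = (2 / 3^{1/3}) u (x / 3^{1/3})`. -/
structure SolvesRescaledPII (ν : ℂ) (v : ℝ → ℂ) : Prop where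
  differentiable : Differentiable ℝ v
  hasDerivAt_deriv : ∀ x : ℝ, HasDerivAt (deriv v) (x * v x / 3 + v x ^ 3 / 2 + ν / 3) x

lemma hasDerivAt_cexp_mul_log (ν : ℂ) {t : ℝ} (ht : 0 < t) :
    HasDerivAt (fun s : ℝ => Complex.exp (ν * Real.log s))
      (Complex.exp (ν * Real.log t) * (ν * (ϱ t : ℂ) ^ 4)) t := by
  refine ((Real.hasDerivAt_log ht.ne').ofReal_comp.const_mul ν).cexp.congr_deriv ?_
  rw [ofReal_invFourthRoot_pow_four ht, Complex.ofReal_inv]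

namespace SolvesRescaledPII
variable {ν a : ℂ} {κ β : ℝ} {Θ : ℝ → ℝ} {v w : ℝ → ℂ}

lemma hasDerivAt_first_integral (hv : SolvesRescaledPII ν v)
    (hw : ∀ x, HasDerivAt w (expIntegral v x) x) (x : ℝ) :
    HasDerivAt (fun x : ℝ => (1 - ν) * w x - (x - 3 * deriv v x + 3 / 2 * v x ^ 2) *
      expIntegral v x) 0 x := by
  have hx : HasDerivAt (fun x : ℝ => (x : ℂ)) 1 x := Complex.ofRealCLM.hasDerivAt
  refine (((hw x).const_mul _).sub (((hx.sub ((hv.hasDerivAt_deriv x).const_mul 3)).add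
    (((hv.differentiable x).hasDerivAt.pow 2).const_mul (3 / 2))).mul
      (hasDerivAt_expIntegral hv.differentiable.continuous x))).congr_deriv ?_
  simp only [Pi.sub_apply, Pi.add_apply, Pi.pow_apply]
  push_cast
  ring

lemma one_sub_mul_eq (hv : SolvesRescaledPII ν v) (hw : ∀ x, HasDerivAt w (expIntegral v x) x)
    (hw0 : (1 - ν) * w 0 = 3 / 2 * v 0 ^ 2 - 3 * deriv v 0) (x : ℝ) :
    (1 - ν) * w x = (x - 3 * deriv v x + 3 / 2 * v x ^ 2) * expIntegral v x := by
  have hconst := is_const_of_deriv_eq_zero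
    (fun x => (hv.hasDerivAt_first_integral hw x).differentiableAt)
    (fun x => (hv.hasDerivAt_first_integral hw x).deriv) x 0
  rw [hw0, expIntegral_zero, Complex.ofReal_zero] at hconst
  linear_combination hconst

lemma reflectedSystem (hv : SolvesRescaledPII ν v)
    (hw : ∀ x, HasDerivAt w (expIntegral v x) x)
    (hw0 : (1 - ν) * w 0 = 3 / 2 * v 0 ^ 2 - 3 * deriv v 0) {g : ℝ → ℂ}
    (hg : ∀ x : ℝ, x ≠ 0 → g x = Complex.exp (ν * Real.log |x|) * w x / x) :
    ReflectedSystem ν (fun t => v (-t))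
      (fun t => expIntegral v (-t) * Complex.exp (ν * Real.log t)) (fun t => g (-t)) := by
  have hgneg : ∀ t > 0, g (-t) = -(Complex.exp (ν * Real.log t) * w (-t) * (ϱ t : ℂ) ^ 4) := by
    intro t ht
    rw [hg _ (neg_ne_zero.2 ht.ne'), abs_neg, abs_of_pos ht, ofReal_invFourthRoot_pow_four ht,
      Complex.ofReal_neg, div_neg, div_eq_mul_inv]
  have hE := hasDerivAt_expIntegral hv.differentiable.continuous
  refine ⟨fun t _ => differentiableAt_comp_neg.2 (hv.differentiable _), fun t ht => ?_,
    fun t ht => ?_, fun t ht => ?_⟩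
  · refine ((HasDerivAt.scomp t (hE (-t)) (hasDerivAt_neg t)).mul
      (hasDerivAt_cexp_mul_log ν ht)).congr_deriv ?_
    simp only [Function.comp_apply, neg_smul, one_smul]
    ring
  · have hderiv := (((hasDerivAt_cexp_mul_log ν ht).mul
      (HasDerivAt.scomp t (hw (-t)) (hasDerivAt_neg t))).mul
        (hasDerivAt_ofReal_invFourthRoot_pow ht 4)).neg
    refine (hderiv.congr_of_eventuallyEq ?_).congr_deriv ?_
    · filter_upwards [Ioi_mem_nhds ht] with s hs using hgneg s hs
    · rw [hgneg t ht]
      simp only [Function.comp_apply, Pi.mul_apply, neg_smul, one_smul]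
      push_cast
      ring
  · have hϱt : (t : ℂ) * (ϱ t : ℂ) ^ 4 = 1 := by
      rw [ofReal_invFourthRoot_pow_four ht, mul_inv_cancel₀ (mod_cast ht.ne')]
    have hrel := hv.one_sub_mul_eq hw hw0 (-t)
    rw [hgneg t ht, deriv_comp_neg]
    push_cast at hrel
    linear_combination (-Complex.exp (ν * Real.log t) * (ϱ t : ℂ) ^ 4) * hrel +
      expIntegral v (-t) * Complex.exp (ν * Real.log t) * hϱt

lemma decayOrder_zero_weight (hv : SolvesRescaledPII ν v)
    (hexp : HasOscillatingExpansion ν a Θ fun t => v (-t)) (hΘ : IsPhase κ β Θ) (hκ : κ ≠ 0) :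
    DecayOrder 0 (fun t => expIntegral v (-t) * Complex.exp (ν * Real.log t)) := by
  simp only [expIntegral, ← Complex.exp_add]
  refine (((hexp.hasDecayingPrimitive_sub hΘ hκ).const_mul
    (-1)).decayOrder_zero_of_hasDerivAt (by norm_num) fun t ht => ?_).cexp
  refine ((HasDerivAt.scomp t (hv.differentiable.continuous.integral_hasStrictDerivAt 0
    (-t)).hasDerivAt (hasDerivAt_neg t)).add
      ((Real.hasDerivAt_log ht.ne').ofReal_comp.const_mul ν)).congr_deriv ?_
  rw [ofReal_invFourthRoot_pow_four ht, Complex.ofReal_inv, neg_one_smul]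
  ring

end SolvesRescaledPII

lemma cbrt3_pos : 0 < cbrt3 := Real.rpow_pos_of_pos (by norm_num) _

lemma ofReal_cbrt3_ne_zero : (cbrt3 : ℂ) ≠ 0 := mod_cast cbrt3_pos.ne'

lemma cbrt3_pow_three : cbrt3 ^ 3 = 3 := by
  rw [cbrt3, ← Real.rpow_natCast, ← Real.rpow_mul (by norm_num)]
  norm_num

lemma ofReal_cbrt3_pow_three : (cbrt3 : ℂ) ^ 3 = 3 := mod_cast cbrt3_pow_three

lemma cbrt3_rpow_three_halves : cbrt3 ^ ((3 : ℝ) / 2) = √3 := by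
  rw [cbrt3, ← Real.rpow_mul (by norm_num), Real.sqrt_eq_rpow]
  norm_num

/-- The function `v` of the theorem: the rescaling of `u` that solves `SolvesRescaledPII`. -/
noncomputable def rescaledPII (u : ℝ → ℂ) (x : ℝ) : ℂ := ((2 / cbrt3 : ℝ) : ℂ) * u (x / cbrt3)

lemma hasDerivAt_rescaledPII {u : ℝ → ℂ} (hu : Differentiable ℝ u) (x : ℝ) :
    HasDerivAt (rescaledPII u) (2 / (cbrt3 : ℂ) ^ 2 * deriv u (x / cbrt3)) x := by
  refine ((HasDerivAt.scomp x (hu (x / cbrt3)).hasDerivAt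
    ((hasDerivAt_id x).div_const cbrt3)).const_mul _).congr_deriv ?_
  rw [Complex.real_smul]
  push_cast
  field_simp

lemma solvesRescaledPII_rescaledPII {ν α : ℂ} (hα : α = -ν / 2) {u : ℝ → ℂ}
    (hu : ContDiff ℝ 2 u)
    (hP : ∀ x : ℝ, deriv (deriv u) x = (x : ℂ) * u x + 2 * (u x) ^ 3 - α) :
    SolvesRescaledPII ν (rescaledPII u) := by
  have hu1 : Differentiable ℝ u := hu.differentiable (by simp)
  refine ⟨fun x => (hasDerivAt_rescaledPII hu1 x).differentiableAt, fun x => ?_⟩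
  rw [show deriv (rescaledPII u) = fun x => 2 / (cbrt3 : ℂ) ^ 2 * deriv u (x / cbrt3) from
    funext fun x => (hasDerivAt_rescaledPII hu1 x).deriv]
  refine ((HasDerivAt.scomp x (hu.differentiable_deriv_two (x / cbrt3)).hasDerivAt
    ((hasDerivAt_id x).div_const cbrt3)).const_mul _).congr_deriv ?_
  have hc := ofReal_cbrt3_ne_zero
  rw [Complex.real_smul, hP, hα, rescaledPII, ← ofReal_cbrt3_pow_three]
  push_cast
  field_simp
  ring

/-- The phase `(2/3) s^{3/2} + b ln s + φ` of the expansion of `u (-s)`, in the variable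
`t = 3^{1/3} s`. -/
noncomputable def rescaledPhase (b φ t : ℝ) : ℝ :=
  2 / 3 * (t / cbrt3) ^ ((3 : ℝ) / 2) + b * Real.log (t / cbrt3) + φ

lemma isPhase_rescaledPhase (b φ : ℝ) : IsPhase (√3)⁻¹ b (rescaledPhase b φ) := by
  intro t ht
  have hc := cbrt3_pos
  have hd : HasDerivAt (fun t => t / cbrt3) (1 / cbrt3) t := (hasDerivAt_id t).div_const _
  have htc : t / cbrt3 ≠ 0 := by positivity
  have hsqrt : (√3)⁻¹ = (cbrt3 * cbrt3 ^ ((1 : ℝ) / 2))⁻¹ := by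
    rw [← cbrt3_rpow_three_halves, ← Real.rpow_one_add' hc.le (by norm_num)]
    norm_num
  have hϱ : (ϱ t ^ 2)⁻¹ = t ^ ((1 : ℝ) / 2) := by
    rw [invFourthRoot_pow ht, ← Real.rpow_neg ht.le]
    norm_num
  refine ((((hd.rpow_const (p := (3 : ℝ) / 2) (Or.inl htc)).const_mul (2 / 3)).add
    ((hd.log htc).const_mul b)).add_const φ).congr_deriv ?_
  rw [invFourthRoot_pow_four ht, hϱ, hsqrt, show (3 : ℝ) / 2 - 1 = 1 / 2 by norm_num,
    Real.div_rpow ht.le hc.le]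
  field_simp

/-- The amplitude of the expansion of `rescaledPII u` for amplitude `d` of `u`. -/
noncomputable def rescaledAmplitude (d : ℂ) : ℂ :=
  ((2 / cbrt3 * cbrt3 ^ ((1 : ℝ) / 4) : ℝ) : ℂ) * d

lemma rescaledAmplitude_sq (d : ℂ) : rescaledAmplitude d ^ 2 = 4 * d ^ 2 / (√3 : ℂ) := by
  have hc := cbrt3_pos
  have hreal : (2 / cbrt3 * cbrt3 ^ ((1 : ℝ) / 4)) ^ 2 = 4 / √3 := by
    rw [← cbrt3_rpow_three_halves, mul_pow, div_pow, ← Real.rpow_mul_natCast hc.le,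
      show (1 : ℝ) / 4 * (2 : ℕ) = 2 - 3 / 2 by norm_num, Real.rpow_sub hc, Real.rpow_two]
    field_simp
    norm_num
  rw [rescaledAmplitude, mul_pow, ← Complex.ofReal_pow, hreal]
  push_cast
  ring

lemma hasOscillatingExpansion_rescaledPII {ν α : ℂ} (hα : α = -ν / 2) {u : ℝ → ℂ} {d : ℂ}
    (hd : (d ^ 2).im = 0) {φ x₀ K : ℝ}
    (hAm : ∀ x : ℝ, x ≤ -x₀ →
      ‖u x - α / x - d * (((-x) ^ (-(1:ℝ)/4) : ℝ) : ℂ) *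
        Complex.sin (((2/3 * (-x) ^ ((3:ℝ)/2) : ℝ) : ℂ)
          - 3/4 * d ^ 2 * (Real.log (-x) : ℂ) + (φ : ℂ))‖
        ≤ K * (-x) ^ (-(7:ℝ)/4)) :
    HasOscillatingExpansion ν (rescaledAmplitude d) (rescaledPhase (-(3 / 4 * (d ^ 2).re)) φ)
      (fun t => rescaledPII u (-t)) := by
  set Θ := rescaledPhase (-(3 / 4 * (d ^ 2).re)) φ with hΘ
  have hc := cbrt3_pos
  have hcC := ofReal_cbrt3_ne_zero
  refine DecayOrder.of_bound (C := 2 / cbrt3 * (K * (1 / cbrt3) ^ (-(7 : ℝ) / 4))) ?_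
  filter_upwards [eventually_ge_atTop (x₀ * cbrt3), eventually_gt_atTop 0] with t ht ht0
  have hsin : Complex.sin (((2/3 * (t / cbrt3) ^ ((3:ℝ)/2) : ℝ) : ℂ)
      - 3/4 * d ^ 2 * (Real.log (t / cbrt3) : ℂ) + (φ : ℂ)) = (Real.sin (Θ t) : ℂ) := by
    have hd2 : d ^ 2 = ((d ^ 2).re : ℂ) := Complex.ext rfl (by simpa using hd)
    rw [Complex.ofReal_sin, hΘ, rescaledPhase, hd2, Complex.ofReal_re]
    push_cast
    congr 1
    ring
  have hpow1 : (t / cbrt3) ^ (-(1 : ℝ) / 4) = cbrt3 ^ ((1 : ℝ) / 4) * ϱ t := by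
    rw [Real.div_rpow ht0.le hc.le, invFourthRoot, neg_div, Real.rpow_neg hc.le, div_inv_eq_mul,
      mul_comm]
  have hpow7 : (t / cbrt3) ^ (-(7 : ℝ) / 4) = (1 / cbrt3) ^ (-(7 : ℝ) / 4) * ϱ t ^ 7 := by
    rw [invFourthRoot_pow ht0, div_eq_mul_one_div, Real.mul_rpow ht0.le (by positivity), mul_comm]
    norm_num
  have h := hAm (-(t / cbrt3)) (neg_le_neg ((le_div_iff₀ hc).2 ht))
  rw [neg_neg, hsin, hpow1, hpow7] at h
  have hscale : rescaledPII u (-t) - (ν * (ϱ t : ℂ) ^ 4 +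
      rescaledAmplitude d * ((ϱ t : ℂ) * (Real.sin (Θ t) : ℂ))) =
      ((2 / cbrt3 : ℝ) : ℂ) * (u (-(t / cbrt3)) - α / ((-(t / cbrt3) : ℝ) : ℂ) -
        d * ((cbrt3 ^ ((1 : ℝ) / 4) * ϱ t : ℝ) : ℂ) * (Real.sin (Θ t) : ℂ)) := by
    have htC : (t : ℂ) ≠ 0 := mod_cast ht0.ne'
    rw [rescaledPII, rescaledAmplitude, ofReal_invFourthRoot_pow_four ht0, hα, neg_div]
    push_cast
    field_simp
    ring
  rw [hscale, norm_mul, Complex.norm_real, Real.norm_of_nonneg (by positivity)]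
  calc _ ≤ 2 / cbrt3 * (K * ((1 / cbrt3) ^ (-(7 : ℝ) / 4) * ϱ t ^ 7)) := by gcongr
    _ = _ := by ring

/-! ### Return to the negative half-line -/

lemma DecayOrder.exists_norm_comp_neg_le {E : Type*} [NormedAddCommGroup E] {n : ℕ} {f : ℝ → E}
    (hf : DecayOrder n f) :
    ∃ x₁ : ℝ, 0 < x₁ ∧ ∃ C : ℝ, 0 < C ∧ ∀ x ≤ -x₁, ‖f (-x)‖ ≤ C * (-x) ^ (-(n : ℝ) / 4) := by
  obtain ⟨C, hC0, hC⟩ := hf.exists_bound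
  obtain ⟨T, hT⟩ := eventually_atTop.1 hC
  refine ⟨max T 1, by positivity, C, hC0, fun x hx => ?_⟩
  have hx' : max T 1 ≤ -x := le_neg_of_le_neg hx
  rw [← invFourthRoot_pow (one_pos.trans_le ((le_max_right T 1).trans hx'))]
  exact hT _ ((le_max_left T 1).trans hx')

lemma hasDerivAt_of_eq_integral_cexp {u w : ℝ → ℂ} (hu : Continuous u) {c : ℂ}
    (hw : ∀ x : ℝ, w x = (∫ y in (0 : ℝ)..x, Complex.exp (((2 / cbrt3 : ℝ) : ℂ) *
      ∫ z in (0 : ℝ)..y, u (z / cbrt3))) - c) (x : ℝ) :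
    HasDerivAt w (expIntegral (rescaledPII u) x) x := by
  have hint : ∀ y, ((2 / cbrt3 : ℝ) : ℂ) * ∫ z in (0 : ℝ)..y, u (z / cbrt3) =
      ∫ z in (0 : ℝ)..y, rescaledPII u z :=
    fun y => (intervalIntegral.integral_const_mul _ _).symm
  simp only [hint] at hw
  have hv : Continuous (rescaledPII u) :=
    continuous_const.mul (hu.comp (continuous_id.div_const cbrt3))
  have hexp : Continuous (expIntegral (rescaledPII u)) :=
    continuous_iff_continuousAt.2 fun y => (hasDerivAt_expIntegral hv y).continuousAt
  rw [funext hw]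
  exact (hexp.integral_hasStrictDerivAt 0 x).hasDerivAt.sub_const c

lemma one_sub_mul_initial_value {u : ℝ → ℂ} (hu : Differentiable ℝ u) {ν c w₀ : ℂ}
    (hν : 1 - ν ≠ 0) (hc : c = (2 * cbrt3 / (1 - ν)) * (deriv u 0 - (u 0) ^ 2))
    (hw₀ : w₀ = -c) :
    (1 - ν) * w₀ = 3 / 2 * rescaledPII u 0 ^ 2 - 3 * deriv (rescaledPII u) 0 := by
  have hcbrt := ofReal_cbrt3_ne_zero
  rw [hw₀, hc, (hasDerivAt_rescaledPII hu 0).deriv, rescaledPII, zero_div,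
    ← ofReal_cbrt3_pow_three]
  push_cast
  field_simp
  ring

lemma zpow_mul_deriv_mul_cexp_mul_sq_neg {ν : ℂ} {v w : ℝ → ℂ}
    (hw : ∀ x, HasDerivAt w (expIntegral v x) x) {t : ℝ} (ht : 0 < t) :
    ((-t : ℝ) : ℂ) ^ (-2 : ℤ) * deriv w (-t) * Complex.exp (ν * Real.log |-t|) * v (-t) ^ 2 =
      (ϱ t : ℂ) ^ 8 * (expIntegral v (-t) * Complex.exp (ν * Real.log t)) * v (-t) ^ 2 := by
  have hzpow : ((-t : ℝ) : ℂ) ^ (-2 : ℤ) = (ϱ t : ℂ) ^ 8 := by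
    rw [show (ϱ t : ℂ) ^ 8 = ((ϱ t : ℂ) ^ 4) ^ 2 by ring, ofReal_invFourthRoot_pow_four ht,
      inv_pow, Complex.ofReal_neg, Even.neg_zpow (by decide), zpow_neg]
    norm_cast
  rw [hzpow, (hw (-t)).deriv, abs_neg, abs_of_pos ht]
  ring

lemma integrableOn_Iic_of_comp_neg {E : Type*} [NormedAddCommGroup E] {f F : ℝ → E}
    (h : ∀ t > 0, f (-t) = F t) {x : ℝ} (hx : x < 0) (hF : IntegrableOn F (Set.Ioi (-x))) :
    IntegrableOn f (Set.Iic x) := by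
  rw [integrableOn_Iic_iff_integrableOn_Iio]
  have hneg : IntegrableOn (fun t => f (-t)) (Set.Ioi (-x)) :=
    hF.congr_fun (fun t ht => (h t ((neg_pos.2 hx).trans ht)).symm) measurableSet_Ioi
  simpa only [neg_neg] using hneg.comp_neg_Iio

lemma integral_Iic_of_comp_neg {E : Type*} [NormedAddCommGroup E] [NormedSpace ℝ E]
    {f F : ℝ → E} (h : ∀ t > 0, f (-t) = F t) {x : ℝ} (hx : x < 0) :
    ∫ y in Set.Iic x, f y = ∫ t in Set.Ioi (-x), F t := by
  rw [← setIntegral_congr_fun measurableSet_Ioi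
    (fun t ht => h t ((neg_pos.2 hx).trans ht)), integral_comp_neg_Ioi, neg_neg]

theorem SolvesRescaledPII.integral_Iic_asymptotics {ν a γ : ℂ} {κ β : ℝ} {Θ : ℝ → ℝ}
    {v w g : ℝ → ℂ} (hv : SolvesRescaledPII ν v) (hw : ∀ x, HasDerivAt w (expIntegral v x) x)
    (hw0 : (1 - ν) * w 0 = 3 / 2 * v 0 ^ 2 - 3 * deriv v 0)
    (hg : ∀ x : ℝ, x ≠ 0 → g x = Complex.exp (ν * Real.log |x|) * w x / x)
    (hγ : Tendsto g atBot (𝓝 γ)) (hexp : HasOscillatingExpansion ν a Θ fun t => v (-t))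
    (hΘ : IsPhase κ β Θ) (hκ : κ ≠ 0) :
    (∀ x : ℝ, x < 0 → IntegrableOn (fun y : ℝ => (y : ℂ) ^ (-2 : ℤ) * deriv w y *
      Complex.exp (ν * Real.log |y|) * v y ^ 2) (Set.Iic x)) ∧
    ∃ x₁ : ℝ, 0 < x₁ ∧ ∃ C : ℝ, 0 < C ∧ ∀ x : ℝ, x ≤ -x₁ →
      ‖(∫ y in Set.Iic x, (y : ℂ) ^ (-2 : ℤ) * deriv w y * Complex.exp (ν * Real.log |y|) *
        v y ^ 2) - (1 - ν) * γ * (a ^ 2 / 3) * (((-x) ^ (-(3 : ℝ) / 2) : ℝ) : ℂ)‖ ≤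
          C * (-x) ^ (-(3 : ℝ)) := by
  have S := hv.reflectedSystem hw hw0 hg
  have hH := hv.decayOrder_zero_weight hexp hΘ hκ
  have hneg := fun t (ht : 0 < t) => zpow_mul_deriv_mul_cexp_mul_sq_neg (ν := ν) hw ht
  obtain ⟨x₁, hx₁, C, hC, hbound⟩ := (S.decayOrder_integral_Ioi_sub hH hexp hΘ hκ
    (hγ.comp tendsto_neg_atTop_atBot)).exists_norm_comp_neg_le
  refine ⟨fun x hx => integrableOn_Iic_of_comp_neg hneg hx
    (S.integrableOn_integrand hH hexp.decayOrder_one (neg_pos.2 hx)), x₁, hx₁, C, hC,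
    fun x hx => ?_⟩
  have hx0 : x < 0 := hx.trans_lt (neg_neg_of_pos hx₁)
  have hpow6 : (((-x) ^ (-(3 : ℝ) / 2) : ℝ) : ℂ) = (ϱ (-x) : ℂ) ^ 6 := by
    rw [← Complex.ofReal_pow, invFourthRoot_pow (neg_pos.2 hx0)]
    norm_num
  rw [integral_Iic_of_comp_neg hneg hx0, hpow6,
    show -(3 : ℝ) = -((12 : ℕ) : ℝ) / 4 by norm_num]
  exact hbound x hx

theorem stmt_14_general (μ α : ℂ) (hμ : 1 - Complex.I * μ ≠ 0) (hα : α = -Complex.I * μ / 2)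
    (u : ℝ → ℂ) (hu : ContDiff ℝ 2 u)
    (hP : ∀ x : ℝ, deriv (deriv u) x = (x : ℂ) * u x + 2 * (u x) ^ 3 - α)
    (d : ℂ) (hd : (d ^ 2).im = 0) (φ x₀ K : ℝ)
    (hAm : ∀ x : ℝ, x ≤ -x₀ →
      ‖u x - α / x - d * (((-x) ^ (-(1:ℝ)/4) : ℝ) : ℂ) *
        Complex.sin (((2/3 * (-x) ^ ((3:ℝ)/2) : ℝ) : ℂ)
          - 3/4 * d ^ 2 * (Real.log (-x) : ℂ) + (φ : ℂ))‖
        ≤ K * (-x) ^ (-(7:ℝ)/4))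
    (Cc : ℂ)
    (hC : Cc = (2 * cbrt3 / (1 - Complex.I * μ)) * (deriv u 0 - (u 0) ^ 2))
    (w : ℝ → ℂ)
    (hw : ∀ x : ℝ, w x =
      (∫ y in (0:ℝ)..x, Complex.exp (((2 / cbrt3 : ℝ) : ℂ) *
        ∫ z in (0:ℝ)..y, u (z / cbrt3))) - Cc)
    (v : ℝ → ℂ)
    (hv : ∀ x : ℝ, v x = ((2 / cbrt3 : ℝ) : ℂ) * u (x / cbrt3))
    (g : ℝ → ℂ)
    (hg : ∀ x : ℝ, x ≠ 0 →
      g x = Complex.exp (Complex.I * μ * Real.log |x|) * w x / x)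
    (gm : ℂ) (hgm : Tendsto g atBot (𝓝 gm)) :
    (∀ x : ℝ, x < 0 → IntegrableOn
      (fun y : ℝ => (y : ℂ) ^ (-2 : ℤ) * deriv w y *
        Complex.exp (Complex.I * μ * Real.log |y|) * (v y) ^ 2) (Set.Iic x)) ∧
    ∃ x₁ : ℝ, 0 < x₁ ∧ ∃ K' : ℝ, 0 < K' ∧ ∀ x : ℝ, x ≤ -x₁ →
      ‖(∫ y in Set.Iic x, (y : ℂ) ^ (-2 : ℤ) * deriv w y *
          Complex.exp (Complex.I * μ * Real.log |y|) * (v y) ^ 2)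
        - (2/3) * (1 - Complex.I * μ) * gm * (2 * d ^ 2 / (Real.sqrt 3 : ℂ)) *
            (((-x) ^ (-(3:ℝ)/2) : ℝ) : ℂ)‖ ≤ K' * (-x) ^ (-(3:ℝ)) := by
  obtain rfl : v = rescaledPII u := funext hv
  have hα' : α = -(Complex.I * μ) / 2 := by rw [hα, neg_mul]
  have hPII := solvesRescaledPII_rescaledPII hα' hu hP
  have hw' := hasDerivAt_of_eq_integral_cexp hu.continuous hw
  have hw0 := one_sub_mul_initial_value (hu.differentiable (by simp)) hμ hC
    (w₀ := w 0) (by simp [hw])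
  have hcoeff : (2/3) * (1 - Complex.I * μ) * gm * (2 * d ^ 2 / (√3 : ℂ)) =
      (1 - Complex.I * μ) * gm * (rescaledAmplitude d ^ 2 / 3) := by
    rw [rescaledAmplitude_sq]
    ring
  rw [hcoeff]
  exact hPII.integral_Iic_asymptotics hw' hw0 hg hgm
    (hasOscillatingExpansion_rescaledPII hα' hd hAm) (isPhase_rescaledPhase _ _) (by positivity)

/-- Asymptotics of the integral `∫_{-∞}^x y⁻² w'(y) e^{iμ ln|y|} v(y)² dy` as `x → -∞`:
it converges and equals `(2/3)(1-iμ) g₋ (2d²/√3) (-x)^{-3/2} + O((-x)^{-3})`. -/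
theorem stmt_14 (μ : ℝ) (α : ℂ) (hα : α = -Complex.I * μ / 2)
    (u : ℝ → ℂ) (hu : ContDiff ℝ (⊤ : ℕ∞) u)
    (hP : ∀ x : ℝ, deriv (deriv u) x = (x : ℂ) * u x + 2 * (u x) ^ 3 - α)
    (him : ∀ x : ℝ, (u x).re = 0)
    (d : ℂ) (hd : d.re = 0) (φ x₀ K : ℝ) (hx₀ : 0 < x₀) (hK : 0 < K)
    (hAm : ∀ x : ℝ, x ≤ -x₀ →
      ‖u x - α / x - d * (((-x) ^ (-(1:ℝ)/4) : ℝ) : ℂ) *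
        Complex.sin (((2/3 * (-x) ^ ((3:ℝ)/2) : ℝ) : ℂ)
          - 3/4 * d ^ 2 * (Real.log (-x) : ℂ) + (φ : ℂ))‖
        ≤ K * (-x) ^ (-(7:ℝ)/4))
    (Cc : ℂ)
    (hC : Cc = (2 * cbrt3 / (1 - Complex.I * μ)) * (deriv u 0 - (u 0) ^ 2))
    (w : ℝ → ℂ)
    (hw : ∀ x : ℝ, w x =
      (∫ y in (0:ℝ)..x, Complex.exp (((2 / cbrt3 : ℝ) : ℂ) *
        ∫ z in (0:ℝ)..y, u (z / cbrt3))) - Cc)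
    (v : ℝ → ℂ)
    (hv : ∀ x : ℝ, v x = ((2 / cbrt3 : ℝ) : ℂ) * u (x / cbrt3))
    (g : ℝ → ℂ)
    (hg : ∀ x : ℝ, x ≠ 0 →
      g x = Complex.exp (Complex.I * μ * Real.log |x|) * w x / x)
    (gm : ℂ) (hgm : Filter.Tendsto g Filter.atBot (nhds gm)) :
    (∀ x : ℝ, x < 0 → MeasureTheory.IntegrableOn
      (fun y : ℝ => (y : ℂ) ^ (-2 : ℤ) * deriv w y *
        Complex.exp (Complex.I * μ * Real.log |y|) * (v y) ^ 2) (Set.Iic x)) ∧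
    ∃ x₁ : ℝ, 0 < x₁ ∧ ∃ K' : ℝ, 0 < K' ∧ ∀ x : ℝ, x ≤ -x₁ →
      ‖(∫ y in Set.Iic x, (y : ℂ) ^ (-2 : ℤ) * deriv w y *
          Complex.exp (Complex.I * μ * Real.log |y|) * (v y) ^ 2)
        - (2/3) * (1 - Complex.I * μ) * gm * (2 * d ^ 2 / (Real.sqrt 3 : ℂ)) *
            (((-x) ^ (-(3:ℝ)/2) : ℝ) : ℂ)‖ ≤ K' * (-x) ^ (-(3:ℝ)) := by
  refine stmt_14_general μ α (fun h => ?_) hα u (contDiff_infty.1 hu 2) hP d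
    (by simp [sq, hd]) φ x₀ K hAm Cc hC w hw v hv g hg gm hgm
  simpa using congrArg Complex.re h
end

section
/- Let μ ∈ ℝ, set α := −iμ/2, let β ∈ ℝ, and let u : ℝ → ℂ be a smooth solution of the PII equation u''(x) = x·u(x) + 2·u(x)³ − α on ℝ, taking purely imaginary values on ℝ. Define w(x) := ∫₀ˣ exp( (2/3^{1/3}) ∫₀^y u(z/3^{1/3}) dz ) dy − C with C := (2·3^{1/3}/(1−iμ))·(u'(0) − u(0)²), and define z : (0,∞)×ℝ → ℂ by z(t,x) := e^{iβ}·t^{1/3}·e^{−(iμ/3)·ln t}·w(x·t^{−1/3}). Then for all t > 0 and x ∈ ℝ: ∂_t z(t,x) = −∂_x³ z(t,x) + (3/2)·conj(∂_x z(t,x))·(∂_x² z(t,x))², and |∂_x z(t,x)| = 1. -/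
/-!
Put `c = 3^{1/3}` and `k(s) = (2/c) u(s/c)`, and let `E` solve `E' = k E`, `E(0) = 1`, so that
`w' = E`; as `u` is purely imaginary, `|E| = 1`. In the self-similar ansatz all powers of `t` and
all phases cancel from the flow, leaving the profile equation
`(1 - iμ) w - s w' = 3 (-w''' + (3/2) conj(w') w''²)`, whose right-hand side is
`3 (k²/2 - k') E` because `conj(E) E² = E`. Both sides have the same derivative exactly when
`3 k'' = s k + (3/2) k³ + iμ`, which is the Painlevé equation for `u` after rescaling, and the
constant `C` is the one for which both sides agree at `s = 0`.
-/

section Rescaling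

lemma rpow_one_third_pow_three {t : ℝ} (ht : 0 ≤ t) : (t ^ ((1 : ℝ) / 3)) ^ 3 = t := by
  rw [one_div]
  exact_mod_cast Real.rpow_inv_natCast_pow ht three_ne_zero

lemma hasDerivAt_rpow_one_third {t : ℝ} (ht : 0 < t) :
    HasDerivAt (fun s : ℝ => s ^ ((1 : ℝ) / 3)) (1 / (3 * (t ^ ((1 : ℝ) / 3)) ^ 2)) t := by
  refine (Real.hasDerivAt_rpow_const (Or.inl ht.ne')).congr_deriv ?_
  rw [Real.rpow_sub_one ht.ne']
  nth_rw 2 [← rpow_one_third_pow_three ht.le]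
  have hρ : t ^ ((1 : ℝ) / 3) ≠ 0 := by positivity
  field_simp

lemma deriv_const_mul_comp_div (a : ℂ) (f : ℝ → ℂ) (c : ℝ) :
    deriv (fun x => a * f (x / c)) = fun x => a / c * deriv f (x / c) := by
  funext x
  simp only [div_eq_inv_mul]
  rw [deriv_const_mul_field, deriv_comp_mul_left c⁻¹ f, Complex.real_smul]
  push_cast
  ring

/-- The rescaling `k(s) = (2/c) u(s/c)` of a function `u`. At `c = 3^{1/3}` it turns a solution
of the second Painlevé equation into `i` times the curvature of a self-similar profile. -/
noncomputable def painleveRescale (c : ℝ) (u : ℝ → ℂ) (s : ℝ) : ℂ :=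
  2 / c * u (s / c)

lemma continuous_painleveRescale {u : ℝ → ℂ} (hu : Continuous u) (c : ℝ) :
    Continuous (painleveRescale c u) := by
  unfold painleveRescale
  fun_prop

lemma deriv_painleveRescale (c : ℝ) (u : ℝ → ℂ) :
    deriv (painleveRescale c u) = fun s => 2 / c / c * deriv u (s / c) :=
  deriv_const_mul_comp_div _ u c

lemma painleveRescale_ode {α : ℂ} {u : ℝ → ℂ}
    (hP : ∀ x : ℝ, deriv (deriv u) x = x * u x + 2 * u x ^ 3 - α) {c : ℝ} (hc : c ≠ 0) (s : ℝ) :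
    c ^ 3 * deriv (deriv (painleveRescale c u)) s =
      s * painleveRescale c u s + c ^ 3 / 2 * painleveRescale c u s ^ 3 - 2 * α := by
  have hc' : (c : ℂ) ≠ 0 := mod_cast hc
  simp only [deriv_painleveRescale, deriv_const_mul_comp_div, hP, painleveRescale]
  push_cast
  field_simp

lemma painleveRescale_re_eq_zero {u : ℝ → ℂ} (hu : ∀ x, (u x).re = 0) (c s : ℝ) :
    (painleveRescale c u s).re = 0 := by
  have hscale : painleveRescale c u s = (2 / c : ℝ) * u (s / c) := by
    rw [painleveRescale]
    push_cast
    rfl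
  rw [hscale, Complex.re_ofReal_mul, hu, mul_zero]

end Rescaling

section Tangent

/-- The solution `E` of `E' = k E`, `E 0 = 1`. For `k = i κ` it is the unit tangent of the planar
curve with curvature `κ`. -/
noncomputable def tangent (k : ℝ → ℂ) (s : ℝ) : ℂ :=
  Complex.exp (∫ y in (0 : ℝ)..s, k y)

lemma tangent_zero (k : ℝ → ℂ) : tangent k 0 = 1 := by
  simp [tangent]

lemma hasDerivAt_tangent {k : ℝ → ℂ} (hk : Continuous k) (s : ℝ) :
    HasDerivAt (tangent k) (k s * tangent k s) s :=
  (hk.integral_hasStrictDerivAt 0 s).hasDerivAt.cexp.congr_deriv (mul_comm _ _)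

lemma hasDerivAt_integral_tangent {k : ℝ → ℂ} (hk : Continuous k) (s : ℝ) :
    HasDerivAt (fun x => ∫ y in (0 : ℝ)..x, tangent k y) (tangent k s) s := by
  have hcont : Continuous (tangent k) :=
    continuous_iff_continuousAt.mpr fun y => (hasDerivAt_tangent hk y).continuousAt
  exact (hcont.integral_hasStrictDerivAt 0 s).hasDerivAt

lemma norm_tangent {k : ℝ → ℂ} (hk : ∀ s, (k s).re = 0) (s : ℝ) : ‖tangent k s‖ = 1 := by
  have hk_im : k = fun y => Complex.I * ((k y).im : ℂ) := by
    funext y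
    apply Complex.ext <;> simp [hk y]
  rw [tangent, hk_im, intervalIntegral.integral_const_mul, intervalIntegral.integral_ofReal,
    Complex.norm_exp_I_mul_ofReal]

lemma tangent_painleveRescale (c : ℝ) (u : ℝ → ℂ) (s : ℝ) :
    tangent (painleveRescale c u) s =
      Complex.exp ((2 / c : ℝ) * ∫ y in (0 : ℝ)..s, u (y / c)) := by
  simp only [tangent, painleveRescale, intervalIntegral.integral_const_mul]
  push_cast
  rfl

end Tangent

section Profile

lemma one_sub_I_mul_ofReal_ne_zero (μ : ℝ) : 1 - Complex.I * μ ≠ 0 := by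
  intro h
  simpa using congrArg Complex.re h

/-- The equation that the flow imposes on the profile `w` of a self-similar solution of
parameter `μ`. -/
def SolvesProfileEquation (μ : ℝ) (w : ℝ → ℂ) : Prop :=
  ∀ s : ℝ, (1 - Complex.I * μ) * w s - s * deriv w s =
    3 * (-deriv (deriv (deriv w)) s
      + 3 / 2 * (starRingEnd ℂ) (deriv w s) * deriv (deriv w) s ^ 2)

variable {k E w : ℝ → ℂ}

lemma profile_first_integral {m ν : ℂ} (hk : Differentiable ℝ k) (hk' : Differentiable ℝ (deriv k))
    (hode : ∀ s : ℝ, m * deriv (deriv k) s = s * k s + m / 2 * k s ^ 3 + ν)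
    (hE : ∀ s, HasDerivAt E (k s * E s) s) (hw : ∀ s, HasDerivAt w (E s) s)
    (h0 : (1 - ν) * w 0 = m * (k 0 ^ 2 / 2 - deriv k 0) * E 0) (s : ℝ) :
    (1 - ν) * w s - s * E s = m * (k s ^ 2 / 2 - deriv k s) * E s := by
  let F : ℝ → ℂ := fun s =>
    (1 - ν) * w s - s * E s - m * (k s ^ 2 / 2 - deriv k s) * E s
  have hF : ∀ s, HasDerivAt F 0 s := by
    intro s
    have hid : HasDerivAt (fun s : ℝ => (s : ℂ)) 1 s := Complex.ofRealCLM.hasDerivAt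
    have hcurv : HasDerivAt (fun s => m * (k s ^ 2 / 2 - deriv k s))
        (m * (k s * deriv k s - deriv (deriv k) s)) s :=
      (((((hk s).hasDerivAt.pow 2).div_const 2).sub (hk' s).hasDerivAt).const_mul m).congr_deriv
        (by ring)
    refine ((((hw s).const_mul (1 - ν)).sub (hid.mul (hE s))).sub
      (hcurv.mul (hE s))).congr_deriv ?_
    linear_combination E s * hode s
  have hF_const : F s = F 0 :=
    is_const_of_deriv_eq_zero (fun s => (hF s).differentiableAt) (fun s => (hF s).deriv) s 0
  have hF_zero : F 0 = 0 := by
    simp only [F, h0]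
    push_cast
    ring
  exact sub_eq_zero.mp (hF_const.trans hF_zero)

lemma flow_rhs_eq_of_unit_tangent (hk : Differentiable ℝ k)
    (hE : ∀ s, HasDerivAt E (k s * E s) s) (hE_norm : ∀ s, ‖E s‖ = 1)
    (hw : ∀ s, HasDerivAt w (E s) s) (s : ℝ) :
    -deriv (deriv (deriv w)) s
        + 3 / 2 * (starRingEnd ℂ) (deriv w s) * deriv (deriv w) s ^ 2 =
      (k s ^ 2 / 2 - deriv k s) * E s := by
  have hw₁ : deriv w = E := funext fun s => (hw s).deriv
  have hw₂ : deriv E = fun s => k s * E s := funext fun s => (hE s).deriv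
  have hw₃ : deriv (fun s => k s * E s) s = deriv k s * E s + k s * (k s * E s) :=
    ((hk s).hasDerivAt.mul (hE s)).deriv
  have hconj : (starRingEnd ℂ) (E s) * E s = 1 := by
    rw [Complex.conj_mul', hE_norm]
    norm_num
  rw [hw₁, hw₂, hw₃]
  linear_combination 3 / 2 * k s ^ 2 * E s * hconj

lemma solvesProfileEquation_of_painleveII {μ : ℝ} {u : ℝ → ℂ}
    (hu : Differentiable ℝ u) (hu' : Differentiable ℝ (deriv u))
    (hP : ∀ x : ℝ, deriv (deriv u) x = x * u x + 2 * u x ^ 3 - (-Complex.I * μ / 2))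
    (him : ∀ x, (u x).re = 0) {c : ℝ} (hc : c ^ 3 = 3)
    (hw : ∀ s, HasDerivAt w (tangent (painleveRescale c u) s) s)
    (h0 : (1 - Complex.I * μ) * w 0 = 2 * c * (u 0 ^ 2 - deriv u 0)) :
    SolvesProfileEquation μ w := by
  have hc_ne : c ≠ 0 := by rintro rfl; norm_num at hc
  have hc_complex : (c : ℂ) ^ 3 = 3 := mod_cast hc
  set k := painleveRescale c u with hk_def
  have hk : Differentiable ℝ k := by unfold k painleveRescale; fun_prop
  have hk' : Differentiable ℝ (deriv k) := by rw [hk_def, deriv_painleveRescale]; fun_prop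
  have hk_im : ∀ s, (k s).re = 0 := painleveRescale_re_eq_zero him c
  have hode : ∀ s : ℝ, 3 * deriv (deriv k) s = s * k s + 3 / 2 * k s ^ 3 + Complex.I * μ := by
    intro s
    have h := painleveRescale_ode hP hc_ne s
    rw [hc_complex] at h
    linear_combination h
  have hinit : (1 - Complex.I * μ) * w 0 = 3 * (k 0 ^ 2 / 2 - deriv k 0) * tangent k 0 := by
    have hc_ne' : (c : ℂ) ≠ 0 := mod_cast hc_ne
    rw [h0, tangent_zero, hk_def, deriv_painleveRescale, painleveRescale]
    beta_reduce
    rw [zero_div, ← hc_complex]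
    field_simp
  have hE := hasDerivAt_tangent hk.continuous
  intro s
  rw [flow_rhs_eq_of_unit_tangent hk hE (norm_tangent hk_im) hw, (hw s).deriv, ← mul_assoc]
  exact profile_first_integral hk hk' hode hE hw hinit s

end Profile

section SelfSimilar

/-- The unimodular factor `e^{iβ} e^{-(iμ/3) ln t}` by which the self-similar curve of parameter
`μ` is rotated at time `t`. -/
noncomputable def selfSimilarPhase (μ β t : ℝ) : ℂ :=
  Complex.exp (Complex.I * (β - μ / 3 * Real.log t : ℝ))

/-- The self-similar evolution of the profile `w`, written with `x / t^{1/3}` as the similarity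
variable. Only times `t > 0` are meaningful. -/
noncomputable def selfSimilar (μ β : ℝ) (w : ℝ → ℂ) (t x : ℝ) : ℂ :=
  selfSimilarPhase μ β t * (t ^ ((1 : ℝ) / 3) : ℝ) * w (x / t ^ ((1 : ℝ) / 3))

lemma norm_selfSimilarPhase (μ β t : ℝ) : ‖selfSimilarPhase μ β t‖ = 1 :=
  Complex.norm_exp_I_mul_ofReal _

lemma hasDerivAt_selfSimilarPhase (μ β : ℝ) {t : ℝ} (ht : t ≠ 0) :
    HasDerivAt (selfSimilarPhase μ β) (-(Complex.I * μ / (3 * t)) * selfSimilarPhase μ β t) t := by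
  have hangle := ((Real.hasDerivAt_log ht).const_mul (μ / 3)).const_sub β
  refine (hangle.ofReal_comp.const_mul Complex.I).cexp.congr_deriv ?_
  simp only [selfSimilarPhase]
  push_cast
  field_simp

lemma selfSimilarPhase_eq (μ β t : ℝ) :
    selfSimilarPhase μ β t =
      Complex.exp (Complex.I * β) * Complex.exp (-(Complex.I * μ / 3) * Real.log t) := by
  rw [selfSimilarPhase, ← Complex.exp_add]
  congr 1
  push_cast
  ring

lemma selfSimilar_eq (μ β : ℝ) (w : ℝ → ℂ) {t : ℝ} (ht : 0 ≤ t) (x : ℝ) :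
    selfSimilar μ β w t x =
      Complex.exp (Complex.I * β) * (t ^ ((1 : ℝ) / 3) : ℝ) *
        Complex.exp (-(Complex.I * μ / 3) * Real.log t) * w (x * t ^ (-(1 : ℝ) / 3)) := by
  rw [selfSimilar, selfSimilarPhase_eq, neg_div, Real.rpow_neg ht, ← div_eq_mul_inv,
    mul_right_comm (Complex.exp (Complex.I * β))]

variable (μ β : ℝ) {w : ℝ → ℂ} {t : ℝ}

variable (w) in
lemma deriv_selfSimilar (ht : 0 < t) :
    deriv (selfSimilar μ β w t) =
      fun x => selfSimilarPhase μ β t * deriv w (x / t ^ ((1 : ℝ) / 3)) := by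
  have hρ : ((t ^ ((1 : ℝ) / 3) : ℝ) : ℂ) ≠ 0 := mod_cast (Real.rpow_pos_of_pos ht _).ne'
  unfold selfSimilar
  rw [deriv_const_mul_comp_div, mul_div_cancel_right₀ _ hρ]

lemma hasDerivAt_selfSimilar_time (ht : 0 < t) {x : ℝ}
    (hw : DifferentiableAt ℝ w (x / t ^ ((1 : ℝ) / 3))) :
    HasDerivAt (fun s => selfSimilar μ β w s x)
      (selfSimilarPhase μ β t / (3 * (t ^ ((1 : ℝ) / 3) : ℝ) ^ 2) *
        ((1 - Complex.I * μ) * w (x / t ^ ((1 : ℝ) / 3)) -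
          (x / t ^ ((1 : ℝ) / 3) : ℝ) * deriv w (x / t ^ ((1 : ℝ) / 3)))) t := by
  have hphase := hasDerivAt_selfSimilarPhase μ β ht.ne'
  have hρ' := hasDerivAt_rpow_one_third ht
  have hcube : (t : ℂ) = (t ^ ((1 : ℝ) / 3) : ℝ) ^ 3 :=
    mod_cast (rpow_one_third_pow_three ht.le).symm
  have hρ : t ^ ((1 : ℝ) / 3) ≠ 0 := (Real.rpow_pos_of_pos ht _).ne'
  have hρ_complex : ((t ^ ((1 : ℝ) / 3) : ℝ) : ℂ) ≠ 0 := mod_cast hρ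
  have hprofile := hw.hasDerivAt.scomp t ((hasDerivAt_const t x).div hρ' hρ)
  refine ((hphase.mul hρ'.ofReal_comp).mul hprofile).congr_deriv ?_
  simp only [Function.comp_apply, Complex.real_smul, Pi.mul_apply, Pi.div_apply]
  rw [hcube]
  push_cast
  field_simp
  ring

lemma norm_deriv_selfSimilar (hw : ∀ s, ‖deriv w s‖ = 1) (ht : 0 < t) (x : ℝ) :
    ‖deriv (selfSimilar μ β w t) x‖ = 1 := by
  rw [deriv_selfSimilar μ β w ht, norm_mul, norm_selfSimilarPhase, hw, one_mul]

variable {μ}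

lemma selfSimilar_flow (hw : Differentiable ℝ w) (hprofile : SolvesProfileEquation μ w)
    (ht : 0 < t) (x : ℝ) :
    deriv (fun s => selfSimilar μ β w s x) t =
      -deriv (deriv (deriv (selfSimilar μ β w t))) x
        + 3 / 2 * (starRingEnd ℂ) (deriv (selfSimilar μ β w t) x)
          * deriv (deriv (selfSimilar μ β w t)) x ^ 2 := by
  have hphase : (starRingEnd ℂ) (selfSimilarPhase μ β t) * selfSimilarPhase μ β t = 1 := by
    rw [Complex.conj_mul', norm_selfSimilarPhase]
    norm_num
  rw [(hasDerivAt_selfSimilar_time μ β ht (hw _)).deriv, hprofile, deriv_selfSimilar μ β w ht]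
  simp only [deriv_const_mul_comp_div, map_mul]
  set ρ := t ^ ((1 : ℝ) / 3)
  set a := selfSimilarPhase μ β t
  linear_combination
    -(3 / 2 * a / ρ ^ 2 * (starRingEnd ℂ) (deriv w (x / ρ)) * deriv (deriv w) (x / ρ) ^ 2) * hphase

end SelfSimilar

/-- The self-similar function `z(t,x) = e^{iβ} t^{1/3} e^{-(iμ/3) ln t} w(x t^{-1/3})`
solves the geometric flow `z_t = -z_xxx + (3/2) conj(z_x) z_xx²`, `|z_x| = 1` on `(0,∞)×ℝ`. -/
theorem stmt_16 (μ β : ℝ) (α : ℂ) (hα : α = -Complex.I * μ / 2)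
    (u : ℝ → ℂ) (hu : ContDiff ℝ (⊤ : ℕ∞) u)
    (hP : ∀ x : ℝ, deriv (deriv u) x = (x : ℂ) * u x + 2 * (u x) ^ 3 - α)
    (him : ∀ x : ℝ, (u x).re = 0)
    (Cc : ℂ)
    (hC : Cc = (2 * cbrt3 / (1 - Complex.I * μ)) * (deriv u 0 - (u 0) ^ 2))
    (w : ℝ → ℂ)
    (hw : ∀ x : ℝ, w x =
      (∫ y in (0:ℝ)..x, Complex.exp (((2 / cbrt3 : ℝ) : ℂ) *
        ∫ z in (0:ℝ)..y, u (z / cbrt3))) - Cc)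
    (z : ℝ → ℝ → ℂ)
    (hz : ∀ t : ℝ, 0 < t → ∀ x : ℝ, z t x =
      Complex.exp (Complex.I * β) * ((t ^ ((1:ℝ)/3) : ℝ) : ℂ) *
        Complex.exp (-(Complex.I * μ / 3) * Real.log t) *
        w (x * t ^ (-(1:ℝ)/3))) :
    ∀ t : ℝ, 0 < t → ∀ x : ℝ,
      (deriv (fun s : ℝ => z s x) t =
        -(deriv (deriv (deriv (z t))) x) +
          (3/2) * (starRingEnd ℂ) (deriv (z t) x) * (deriv (deriv (z t)) x) ^ 2) ∧
      ‖deriv (z t) x‖ = 1 := by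
  intro t ht x
  have hc : cbrt3 ^ 3 = 3 := rpow_one_third_pow_three (by norm_num)
  have hu₁ : Differentiable ℝ u := hu.differentiable (by simp)
  have hu₂ : Differentiable ℝ (deriv u) :=
    (contDiff_infty_iff_deriv.mp hu).2.differentiable (by simp)
  have hw' : ∀ s, HasDerivAt w (tangent (painleveRescale cbrt3 u) s) s := by
    simp only [← tangent_painleveRescale] at hw
    rw [funext hw]
    have hk := continuous_painleveRescale hu.continuous cbrt3
    exact fun s => (hasDerivAt_integral_tangent hk s).sub_const Cc
  have hw0 : (1 - Complex.I * μ) * w 0 = 2 * cbrt3 * (u 0 ^ 2 - deriv u 0) := by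
    rw [hw, intervalIntegral.integral_same, hC]
    field_simp [one_sub_I_mul_ofReal_ne_zero μ]
    ring
  have hprofile := solvesProfileEquation_of_painleveII hu₁ hu₂ (hα ▸ hP) him hc hw' hw0
  have hw_norm : ∀ s, ‖deriv w s‖ = 1 := fun s => by
    rw [(hw' s).deriv, norm_tangent (painleveRescale_re_eq_zero him cbrt3)]
  have hz_eq : ∀ s, 0 < s → z s = selfSimilar μ β w s := fun s hs => funext fun y =>
    (hz s hs y).trans (selfSimilar_eq μ β w hs.le y).symm
  have hz_time : (fun s => z s x) =ᶠ[nhds t] fun s => selfSimilar μ β w s x :=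
    Filter.eventually_of_mem (Ioi_mem_nhds ht) fun s hs => congrFun (hz_eq s hs) x
  rw [hz_time.deriv_eq, hz_eq t ht]
  exact ⟨selfSimilar_flow β (fun s => (hw' s).differentiableAt) hprofile ht x,
    norm_deriv_selfSimilar μ β hw_norm ht x⟩
end

section
/- Let μ ∈ ℝ, set α := −iμ/2, and let u : ℝ → ℂ be a smooth solution of the PII equation u''(x) = x·u(x) + 2·u(x)³ − α on ℝ, taking purely imaginary values on ℝ and satisfying both asymptotic expansions: (A+) there exist x₀, K > 0 such that |u(x) − α/x − 2α(1−α²)·x^{−4} − 4α(1−α²)(10−3α²)·x^{−7}| ≤ K·x^{−10} for all x ≥ x₀, and (A−) there exist d ∈ iℝ, φ ∈ ℝ and x₁, K' > 0 such that |u(x) − α/x − d·(−x)^{−1/4}·sin( (2/3)(−x)^{3/2} − (3/4)·d²·ln(−x) + φ )| ≤ K'·(−x)^{−7/4} for all x ≤ −x₁. Define w(x) := ∫₀ˣ exp( (2/3^{1/3}) ∫₀^y u(z/3^{1/3}) dz ) dy − C with C := (2·3^{1/3}/(1−iμ))·(u'(0) − u(0)²), and g(x) := e^{iμ·ln|x|}·w(x)/x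 for x ≠ 0. Then the limits g₊ := lim_{x→+∞} g(x) and g₋ := lim_{x→−∞} g(x) exist and are nonzero, the limit lim_{x→+∞} exp( 2·∫_{−x}^{x} u(y) dy ) exists, and g₊/g₋ = lim_{x→+∞} exp( 2·∫_{−x}^{x} u(y) dy ). -/
/-!
Let `U(t) = ∫₀ᵗ u` and `E = exp (2U)`. The PII equation gives
`((t - 2 (u' - u²)) E)' = (1 + 2α) E` with `1 + 2α = 1 - iμ`, so `∫ E` is explicit. The constant `C`
cancels the boundary term at `0`, and after the dilation `x = 3^{1/3} t`, using `2α = -iμ`,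
`g(x) = A · (1 - 2 (u'(t) - u(t)²) / t) · exp (2 (U(t) - α log |t|))`
with a nonzero constant `A` that is the same for both signs of `x`.

The middle factor tends to `1` because `u → 0` forces `u'' = o(t)` by PII, and a Landau inequality
turns this into `u' = o(t)`. The quantity `U(t) - α log |t|` has limits `L₊` and `L₋` at the two
ends: the only part of its derivative that is not absolutely integrable is the oscillating term at
`-∞`, which is integrated by parts once. Thus `g± = A exp (2 L±)`, while
`exp (2 ∫_{-x}^x u) → exp (2 (L₊ - L₋))` because the two logarithms cancel.
-/

open Asymptotics Bornology Filter MeasureTheory Set Topology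

section GrowthOfDerivatives

variable {E : Type*} [NormedAddCommGroup E] [NormedSpace ℝ E]

lemma exists_tendsto_atTop_of_deriv_isBigO_rpow [CompleteSpace E] {f f' : ℝ → E} {p : ℝ}
    (hp : p < -1) (hf : ∀ᶠ x in atTop, HasDerivAt f (f' x) x)
    (hf' : f' =O[atTop] fun x ↦ x ^ p) : ∃ L, Tendsto f atTop (𝓝 L) := by
  have hmeas : StronglyMeasurableAtFilter f' atTop := by
    obtain ⟨a, ha⟩ := eventually_atTop.1 hf
    refine ⟨Ici a, Ici_mem_atTop a, (stronglyMeasurable_deriv f).aestronglyMeasurable.congr ?_⟩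
    filter_upwards [ae_restrict_mem measurableSet_Ici] with x hx using (ha x hx).deriv
  have hint : IntegrableAtFilter f' atTop :=
    hf'.integrableAtFilter hmeas (integrableAtFilter_rpow_atTop_iff.2 hp)
  obtain ⟨a, ha⟩ := integrableAtFilter_atTop_iff.1 hint
  obtain ⟨b, hb⟩ := eventually_atTop.1 hf
  exact ⟨_, tendsto_limUnder_of_hasDerivAt_of_integrableOn_Ioi (a := max a b)
    (fun x hx ↦ hb x ((le_max_right a b).trans hx.le))
    (ha.mono_set (Ioi_subset_Ici (le_max_left a b)))⟩

lemma mul_norm_deriv_le_of_norm_le_of_norm_deriv_two_le {f f' f'' : ℝ → E} {a b ε M : ℝ}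
    (hab : a ≤ b) (hf : ∀ x ∈ Icc a b, HasDerivWithinAt f (f' x) (Icc a b) x)
    (hf' : ∀ x ∈ Icc a b, HasDerivWithinAt f' (f'' x) (Icc a b) x)
    (hε : ∀ x ∈ Icc a b, ‖f x‖ ≤ ε) (hM : ∀ x ∈ Icc a b, ‖f'' x‖ ≤ M) :
    (b - a) * ‖f' a‖ ≤ 2 * ε + M * (b - a) ^ 2 := by
  have hM₀ : 0 ≤ M := (norm_nonneg _).trans (hM a (left_mem_Icc.2 hab))
  have hf'_sub : ∀ x ∈ Icc a b, ‖f' x - f' a‖ ≤ M * (b - a) := fun x hx ↦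
    (norm_image_sub_le_of_norm_deriv_le_segment' hf'
      (fun y hy ↦ hM y (Ico_subset_Icc_self hy)) x hx).trans (by gcongr; exact hx.2)
  have htaylor : ‖(f b - b • f' a) - (f a - a • f' a)‖ ≤ M * (b - a) * (b - a) :=
    norm_image_sub_le_of_norm_deriv_le_segment' (f := fun x ↦ f x - x • f' a)
      (fun x hx ↦ (hf x hx).sub ((hasDerivWithinAt_id x _).smul_const (f' a)))
      (fun x hx ↦ by simpa using hf'_sub x (Ico_subset_Icc_self hx)) b (right_mem_Icc.2 hab)
  calc (b - a) * ‖f' a‖ = ‖(b - a) • f' a‖ := by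
        rw [norm_smul, Real.norm_of_nonneg (sub_nonneg.2 hab)]
    _ = ‖f b - f a - ((f b - b • f' a) - (f a - a • f' a))‖ := by congr 1; module
    _ ≤ ‖f b‖ + ‖f a‖ + ‖(f b - b • f' a) - (f a - a • f' a)‖ :=
        (norm_sub_le _ _).trans (by gcongr; exact norm_sub_le _ _)
    _ ≤ ε + ε + M * (b - a) * (b - a) := by
        gcongr
        exacts [hε b (right_mem_Icc.2 hab), hε a (left_mem_Icc.2 hab)]
    _ = 2 * ε + M * (b - a) ^ 2 := by ring

lemma abs_norm_sub_norm_le_one_of_mem_Icc_add_one {x s : ℝ} (hs : s ∈ Icc x (x + 1)) :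
    |‖x‖ - ‖s‖| ≤ 1 :=
  (abs_norm_sub_norm_le x s).trans (by
    rw [Real.norm_eq_abs, abs_le]; constructor <;> linarith [hs.1, hs.2])

lemma eventually_cobounded_forall_mem_Icc_add_one {P : ℝ → Prop} (h : ∀ᶠ x in cobounded ℝ, P x) :
    ∀ᶠ x in cobounded ℝ, ∀ s ∈ Icc x (x + 1), P s := by
  obtain ⟨r, -, hr⟩ := (hasBasis_cobounded_norm (E := ℝ)).eventually_iff.1 h
  filter_upwards [tendsto_norm_cobounded_atTop.eventually (eventually_ge_atTop (r + 1))]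
    with x hx s hs
  have hxs := (abs_le.1 (abs_norm_sub_norm_le_one_of_mem_Icc_add_one hs)).2
  exact hr (show r ≤ ‖s‖ by linarith)

lemma isLittleO_deriv_id_cobounded {f f' f'' : ℝ → E}
    (hf : ∀ x, HasDerivAt f (f' x) x) (hf' : ∀ x, HasDerivAt f' (f'' x) x)
    (hfo : f =o[cobounded ℝ] (id : ℝ → ℝ)) (hfo'' : f'' =o[cobounded ℝ] (id : ℝ → ℝ)) :
    f' =o[cobounded ℝ] (id : ℝ → ℝ) := by
  refine IsLittleO.of_bound fun c hc ↦ ?_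
  have hc₆ : 0 < c / 6 := by positivity
  filter_upwards [eventually_cobounded_forall_mem_Icc_add_one (hfo.bound hc₆),
    eventually_cobounded_forall_mem_Icc_add_one (hfo''.bound hc₆),
    tendsto_norm_cobounded_atTop.eventually (eventually_ge_atTop 1)] with x hfx hf''x hx
  have hle : ∀ s ∈ Icc x (x + 1), c / 6 * ‖id s‖ ≤ c / 3 * ‖x‖ := fun s hs ↦ by
    have hxs := (abs_le.1 (abs_norm_sub_norm_le_one_of_mem_Icc_add_one hs)).1
    calc c / 6 * ‖s‖ ≤ c / 6 * (2 * ‖x‖) := by gcongr; linarith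
      _ = c / 3 * ‖x‖ := by ring
  have hlandau := mul_norm_deriv_le_of_norm_le_of_norm_deriv_two_le (by linarith : x ≤ x + 1)
    (fun s _ ↦ (hf s).hasDerivWithinAt) (fun s _ ↦ (hf' s).hasDerivWithinAt)
    (fun s hs ↦ (hfx s hs).trans (hle s hs)) (fun s hs ↦ (hf''x s hs).trans (hle s hs))
  simp only [add_sub_cancel_left, one_mul, one_pow, mul_one] at hlandau
  rw [id]
  linarith

end GrowthOfDerivatives

/-- `u` is a solution on the whole real line of the second Painlevé equation with parameter `α`. -/
structure IsPainleveTwo (α : ℂ) (u : ℝ → ℂ) : Prop where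
  contDiff : ContDiff ℝ 2 u
  deriv_deriv : ∀ x : ℝ, deriv (deriv u) x = x * u x + 2 * u x ^ 3 - α

/-- The Miura transform `u' - u²`, the only combination of `u` and `u'` that enters the asymptotics
of the antiderivative of `exp (2 ∫ u)`. -/
noncomputable def miura (u : ℝ → ℂ) (x : ℝ) : ℂ := deriv u x - u x ^ 2

/-- `exp (2 ∫₀ᵗ u)`, which is the integrand of `w` after the dilation. -/
noncomputable def expTwiceIntegral (u : ℝ → ℂ) (t : ℝ) : ℂ :=
  Complex.exp (2 * ∫ s in (0 : ℝ)..t, u s)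

/-- `u` decays along `l`, where its antiderivative is `α log |x| + L + o(1)`. -/
structure HasLogPrimitive (α : ℂ) (u : ℝ → ℂ) (l : Filter ℝ) (L : ℂ) : Prop where
  tendsto_zero : Tendsto u l (𝓝 0)
  tendsto_integral : Tendsto (fun x : ℝ ↦ (∫ s in (0 : ℝ)..x, u s) - α * Real.log |x|) l (𝓝 L)

/-- The function `g` of the theorem in terms of `α = -iμ/2`, for an arbitrary dilation factor `c` in
place of `3^{1/3}`. -/
noncomputable def normalizedPrimitive (α : ℂ) (c : ℝ) (u : ℝ → ℂ) (x : ℝ) : ℂ :=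
  Complex.exp (-(2 * α) * Real.log |x|) *
    ((∫ y in (0 : ℝ)..x, Complex.exp ((2 / c : ℝ) * ∫ z in (0 : ℝ)..y, u (z / c))) -
      2 * c / (1 + 2 * α) * miura u 0) / x

variable {α : ℂ} {u : ℝ → ℂ}

lemma hasDerivAt_expTwiceIntegral (hu : Continuous u) (t : ℝ) :
    HasDerivAt (expTwiceIntegral u) (expTwiceIntegral u t * (2 * u t)) t :=
  ((hu.integral_hasStrictDerivAt 0 t).hasDerivAt.const_mul 2).cexp

lemma integral_exp_integral_comp_div {c : ℝ} (hc : c ≠ 0) (x : ℝ) :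
    ∫ y in (0 : ℝ)..x, Complex.exp ((2 / c : ℝ) * ∫ z in (0 : ℝ)..y, u (z / c)) =
      c * ∫ t in (0 : ℝ)..x / c, expTwiceIntegral u t := by
  have hinner (y : ℝ) : Complex.exp ((2 / c : ℝ) * ∫ z in (0 : ℝ)..y, u (z / c)) =
      expTwiceIntegral u (y / c) := by
    rw [expTwiceIntegral, intervalIntegral.integral_comp_div u hc, zero_div, Complex.real_smul,
      ← mul_assoc, ← Complex.ofReal_mul, div_mul_cancel₀ _ hc, Complex.ofReal_ofNat]
  simp only [hinner]
  rw [intervalIntegral.integral_comp_div _ hc, zero_div, Complex.real_smul]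

namespace IsPainleveTwo

lemma hasDerivAt (hu : IsPainleveTwo α u) (x : ℝ) : HasDerivAt u (deriv u x) x :=
  (hu.contDiff.differentiable two_ne_zero x).hasDerivAt

lemma hasDerivAt_deriv (hu : IsPainleveTwo α u) (x : ℝ) :
    HasDerivAt (deriv u) (x * u x + 2 * u x ^ 3 - α) x :=
  hu.deriv_deriv x ▸ (hu.contDiff.differentiable_deriv_two x).hasDerivAt

lemma hasDerivAt_sub_miura_mul_exp (hu : IsPainleveTwo α u) (t : ℝ) :
    HasDerivAt (fun t : ℝ ↦ (t - 2 * miura u t) * expTwiceIntegral u t)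
      ((1 + 2 * α) * expTwiceIntegral u t) t := by
  have hmiura : HasDerivAt (miura u) _ t := (hu.hasDerivAt_deriv t).sub ((hu.hasDerivAt t).pow 2)
  refine ((Complex.ofRealCLM.hasDerivAt.sub (hmiura.const_mul 2)).mul
    (hasDerivAt_expTwiceIntegral hu.contDiff.continuous t)).congr_deriv ?_
  simp only [Pi.sub_apply, Complex.ofRealCLM_apply, Complex.ofReal_one, miura]
  push_cast
  ring

lemma integral_expTwiceIntegral (hu : IsPainleveTwo α u) (t : ℝ) :
    (1 + 2 * α) * ∫ s in (0 : ℝ)..t, expTwiceIntegral u s =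
      (t - 2 * miura u t) * expTwiceIntegral u t + 2 * miura u 0 := by
  have hcont : Continuous (expTwiceIntegral u) := continuous_iff_continuousAt.2 fun s ↦
    (hasDerivAt_expTwiceIntegral hu.contDiff.continuous s).continuousAt
  rw [← intervalIntegral.integral_const_mul, intervalIntegral.integral_eq_sub_of_hasDerivAt
    (fun s _ ↦ hu.hasDerivAt_sub_miura_mul_exp s)
    ((continuous_const.mul hcont).intervalIntegrable _ _)]
  simp [expTwiceIntegral]

lemma tendsto_miura_div (hu : IsPainleveTwo α u) (hu₀ : Tendsto u (cobounded ℝ) (𝓝 0)) :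
    Tendsto (fun x : ℝ ↦ miura u x / x) (cobounded ℝ) (𝓝 0) := by
  have hone : (fun _ : ℝ ↦ (1 : ℝ)) =o[cobounded ℝ] (id : ℝ → ℝ) := isLittleO_const_id_cobounded 1
  have huo : u =o[cobounded ℝ] (fun _ ↦ (1 : ℝ)) := (isLittleO_one_iff ℝ).2 hu₀
  have hpow {n : ℕ} (hn : n ≠ 0) : (fun x ↦ u x ^ n) =o[cobounded ℝ] (id : ℝ → ℝ) := by
    simpa using (huo.pow (Nat.pos_of_ne_zero hn)).trans (by simpa using hone)
  have hxu : (fun x : ℝ ↦ x * u x) =o[cobounded ℝ] (id : ℝ → ℝ) :=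
    ((Complex.isBigO_ofReal_left.2 (isBigO_refl id _)).mul_isLittleO huo).congr_right mul_one
  have hdd : (fun x : ℝ ↦ x * u x + 2 * u x ^ 3 - α) =o[cobounded ℝ] (id : ℝ → ℝ) :=
    (hxu.add ((hpow three_ne_zero).const_mul_left 2)).sub (isLittleO_const_id_cobounded α)
  have hd : deriv u =o[cobounded ℝ] (id : ℝ → ℝ) :=
    isLittleO_deriv_id_cobounded hu.hasDerivAt hu.hasDerivAt_deriv (huo.trans hone) hdd
  exact (Complex.isLittleO_ofReal_right.2 (hd.sub (hpow two_ne_zero))).tendsto_div_nhds_zero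

lemma normalizedPrimitive_mul (hu : IsPainleveTwo α u) (hα : 1 + 2 * α ≠ 0) {c : ℝ} (hc : 0 < c)
    {t : ℝ} (ht : t ≠ 0) :
    normalizedPrimitive α c u (c * t) =
      Complex.exp (-(2 * α) * Real.log c) / (1 + 2 * α) * (1 - 2 * (miura u t / t)) *
        Complex.exp (2 * ((∫ s in (0 : ℝ)..t, u s) - α * Real.log |t|)) := by
  have hcC : (c : ℂ) ≠ 0 := Complex.ofReal_ne_zero.2 hc.ne'
  have htC : (t : ℂ) ≠ 0 := Complex.ofReal_ne_zero.2 ht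
  have hw : (c * ∫ s in (0 : ℝ)..t, expTwiceIntegral u s) - 2 * c / (1 + 2 * α) * miura u 0 =
      c / (1 + 2 * α) * ((t - 2 * miura u t) * expTwiceIntegral u t) := by
    field_simp
    linear_combination hu.integral_expTwiceIntegral t
  have hlog : (Real.log |c * t| : ℂ) = Real.log c + Real.log |t| := by
    rw [abs_mul, abs_of_pos hc, Real.log_mul hc.ne' (abs_ne_zero.2 ht), Complex.ofReal_add]
  have hexp : Complex.exp (2 * ((∫ s in (0 : ℝ)..t, u s) - α * Real.log |t|)) =
      expTwiceIntegral u t * Complex.exp (-(2 * α) * Real.log |t|) := by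
    rw [expTwiceIntegral, ← Complex.exp_add]
    ring_nf
  rw [normalizedPrimitive, integral_exp_integral_comp_div hc.ne', mul_div_cancel_left₀ _ hc.ne', hw,
    hlog, hexp, mul_add, Complex.exp_add, Complex.ofReal_mul]
  field_simp

lemma tendsto_normalizedPrimitive (hu : IsPainleveTwo α u) (hα : 1 + 2 * α ≠ 0)
    (hu₀ : Tendsto u (cobounded ℝ) (𝓝 0)) {c : ℝ} (hc : 0 < c) {l : Filter ℝ} {L : ℂ}
    (hl : l ≤ cobounded ℝ) (hlc : Tendsto (· / c) l l) (hL : HasLogPrimitive α u l L) :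
    Tendsto (normalizedPrimitive α c u) l
      (𝓝 (Complex.exp (-(2 * α) * Real.log c) / (1 + 2 * α) * Complex.exp (2 * L))) := by
  have hfactors := ((((hu.tendsto_miura_div hu₀).mono_left hl).const_mul 2).const_sub 1 |>.const_mul
    (Complex.exp (-(2 * α) * Real.log c) / (1 + 2 * α))).mul (hL.tendsto_integral.const_mul 2).cexp
  simp only [mul_zero, sub_zero, mul_one] at hfactors
  refine (hfactors.comp hlc).congr' ?_
  filter_upwards [hl (eventually_ne_cobounded 0)] with x hx
  rw [Function.comp_apply, ← hu.normalizedPrimitive_mul hα hc (div_ne_zero hx hc.ne'),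
    mul_div_cancel₀ x hc.ne']

end IsPainleveTwo

namespace HasLogPrimitive

variable {Lp Lm : ℂ}

lemma tendsto_cobounded (hp : HasLogPrimitive α u atTop Lp) (hm : HasLogPrimitive α u atBot Lm) :
    Tendsto u (cobounded ℝ) (𝓝 0) :=
  (IsOrderBornology.cobounded_eq (α := ℝ)) ▸ hm.tendsto_zero.sup hp.tendsto_zero

lemma tendsto_integral_neg_self (hu : Continuous u) (hp : HasLogPrimitive α u atTop Lp)
    (hm : HasLogPrimitive α u atBot Lm) :
    Tendsto (fun x : ℝ ↦ ∫ s in (-x)..x, u s) atTop (𝓝 (Lp - Lm)) := by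
  refine (hp.tendsto_integral.sub
    (hm.tendsto_integral.comp tendsto_neg_atTop_atBot)).congr fun x ↦ ?_
  rw [Function.comp_apply, abs_neg, sub_sub_sub_cancel_right,
    intervalIntegral.integral_interval_sub_left (hu.intervalIntegrable 0 x)
      (hu.intervalIntegrable 0 (-x))]

lemma of_comp_neg {L : ℂ} (h : HasLogPrimitive (-α) (fun x ↦ u (-x)) atTop L) :
    HasLogPrimitive α u atBot (-L) where
  tendsto_zero := by simpa [Function.comp_def] using h.tendsto_zero.comp tendsto_neg_atBot_atTop
  tendsto_integral := by
    refine (h.tendsto_integral.comp tendsto_neg_atBot_atTop).neg.congr fun x ↦ ?_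
    rw [Function.comp_apply, intervalIntegral.integral_comp_neg, neg_neg, neg_zero, abs_neg,
      intervalIntegral.integral_symm]
    ring

end HasLogPrimitive

/-- The phase `θ(y)` of the oscillating term, as a function of `y = -x`. -/
noncomputable def oscPhase (k φ y : ℝ) : ℝ := 2 / 3 * y ^ ((3 : ℝ) / 2) + k * Real.log y + φ

/-- `v(y) = β / y + d y^{-1/4} sin θ(y) + O(y^{-7/4})` as `y → +∞`, for some complex amplitude `d`
and some phase `θ`. The case `d = 0` covers the non-oscillating end `x → +∞`. -/
def HasOscillatingTail (β : ℂ) (v : ℝ → ℂ) : Prop :=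
  ∃ (d : ℂ) (k φ : ℝ), (fun y : ℝ ↦ v y - β / y -
    d * ((y ^ (-(1 : ℝ) / 4) * Real.sin (oscPhase k φ y) : ℝ) : ℂ)) =O[atTop]
      fun y : ℝ ↦ y ^ (-(7 : ℝ) / 4)

lemma hasDerivAt_oscPhase (k φ : ℝ) {y : ℝ} (hy : 0 < y) :
    HasDerivAt (oscPhase k φ) (y ^ ((1 : ℝ) / 2) + k * y⁻¹) y := by
  refine ((((Real.hasDerivAt_rpow_const (p := 3 / 2) (Or.inl hy.ne')).const_mul (2 / 3)).add
    ((Real.hasDerivAt_log hy.ne').const_mul k)).add_const φ).congr_deriv ?_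
  norm_num
  ring

lemma hasDerivAt_rpow_mul_cos_oscPhase (k φ : ℝ) {y : ℝ} (hy : 0 < y) :
    HasDerivAt (fun y ↦ y ^ (-(3 : ℝ) / 4) * Real.cos (oscPhase k φ y))
      (-(y ^ (-(1 : ℝ) / 4) * Real.sin (oscPhase k φ y)) - y ^ (-(7 : ℝ) / 4) *
        (3 / 4 * Real.cos (oscPhase k φ y) + k * Real.sin (oscPhase k φ y))) y := by
  have hquarter : y ^ (-(1 : ℝ) / 4) = y ^ (-(3 : ℝ) / 4) * y ^ ((1 : ℝ) / 2) := by
    rw [← Real.rpow_add hy]; norm_num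
  have hseven : y ^ (-(7 : ℝ) / 4) = y ^ (-(3 : ℝ) / 4) * y⁻¹ := by
    rw [← Real.rpow_neg_one, ← Real.rpow_add hy]; norm_num
  refine ((Real.hasDerivAt_rpow_const (p := -3 / 4) (Or.inl hy.ne')).mul
    (hasDerivAt_oscPhase k φ hy).cos).congr_deriv ?_
  rw [show (-3 / 4 - 1 : ℝ) = -7 / 4 by norm_num, hquarter, hseven]
  ring

lemma isBigO_rpow_mul_of_abs_le {p C : ℝ} {s : ℝ → ℝ} (hs : ∀ y, |s y| ≤ C) :
    (fun y : ℝ ↦ y ^ p * s y) =O[atTop] fun y ↦ y ^ p := by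
  simpa using (isBigO_refl (fun y : ℝ ↦ y ^ p) atTop).mul
    (IsBigO.of_bound C (.of_forall fun y ↦ by simpa using hs y) : s =O[atTop] fun _ ↦ (1 : ℝ))

lemma tendsto_rpow_mul_of_abs_le {p C : ℝ} (hp : p < 0) {s : ℝ → ℝ} (hs : ∀ y, |s y| ≤ C) :
    Tendsto (fun y : ℝ ↦ y ^ p * s y) atTop (𝓝 0) :=
  (isBigO_rpow_mul_of_abs_le hs).trans_tendsto
    (by simpa using tendsto_rpow_neg_atTop (neg_pos.2 hp))

lemma isBigO_zpow_rpow_atTop {n : ℤ} {p : ℝ} (hn : (n : ℝ) ≤ p) :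
    (fun x : ℝ ↦ (x : ℂ) ^ n) =O[atTop] fun x : ℝ ↦ x ^ p := by
  refine IsBigO.of_bound 1 ?_
  filter_upwards [eventually_ge_atTop 1] with x hx
  have hx₀ : 0 ≤ x := zero_le_one.trans hx
  rw [norm_zpow, Complex.norm_real, Real.norm_of_nonneg hx₀, one_mul,
    Real.norm_of_nonneg (Real.rpow_nonneg hx₀ _), ← Real.rpow_intCast]
  exact Real.rpow_le_rpow_of_exponent_le hx hn

namespace HasOscillatingTail

variable {β : ℂ} {v : ℝ → ℂ}

lemma tendsto_zero (hv : HasOscillatingTail β v) : Tendsto v atTop (𝓝 0) := by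
  obtain ⟨d, k, φ, hO⟩ := hv
  have hrem := hO.trans_tendsto
    (by simpa [neg_div] using tendsto_rpow_neg_atTop (y := 7 / 4) (by norm_num))
  have hpole : Tendsto (fun y : ℝ ↦ β / y) atTop (𝓝 0) := by
    simpa [div_eq_mul_inv] using tendsto_inv_atTop_zero.ofReal.const_mul β
  have hosc := (tendsto_rpow_mul_of_abs_le (p := -(1 : ℝ) / 4) (by norm_num)
    fun y ↦ Real.abs_sin_le_one (oscPhase k φ y)).ofReal.const_mul d
  simpa using (hrem.add hosc).add hpole

lemma exists_tendsto_integral_sub_log (hv : HasOscillatingTail β v) (hc : Continuous v) :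
    ∃ L, Tendsto (fun y : ℝ ↦ (∫ s in (0 : ℝ)..y, v s) - β * Real.log |y|) atTop (𝓝 L) := by
  obtain ⟨d, k, φ, hO⟩ := hv
  have hrem := isBigO_rpow_mul_of_abs_le (p := -(7 : ℝ) / 4) (C := 3 / 4 + |k|)
    (s := fun y ↦ 3 / 4 * Real.cos (oscPhase k φ y) + k * Real.sin (oscPhase k φ y)) fun y ↦ by
      refine (abs_add_le _ _).trans ?_
      rw [abs_mul, abs_mul, abs_of_pos (by norm_num : (0 : ℝ) < 3 / 4)]
      gcongr
      · exact mul_le_of_le_one_right (by norm_num) (Real.abs_cos_le_one _)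
      · exact mul_le_of_le_one_right (abs_nonneg k) (Real.abs_sin_le_one _)
  -- Adding `d y^{-3/4} cos θ(y)` removes the oscillating term from the derivative.
  obtain ⟨L, hL⟩ := exists_tendsto_atTop_of_deriv_isBigO_rpow
    (f := fun y : ℝ ↦ (∫ s in (0 : ℝ)..y, v s) - β * Real.log y +
      d * ((y ^ (-(3 : ℝ) / 4) * Real.cos (oscPhase k φ y) : ℝ) : ℂ)) (by norm_num)
    ((eventually_gt_atTop 0).mono fun y hy ↦
      (((hc.integral_hasStrictDerivAt 0 y).hasDerivAt.sub
        ((Real.hasDerivAt_log hy.ne').ofReal_comp.const_mul β)).add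
          ((hasDerivAt_rpow_mul_cos_oscPhase k φ hy).ofReal_comp.const_mul d)).congr_deriv
            (by push_cast; ring))
    (hO.sub ((Complex.isBigO_ofReal_left.2 hrem).const_mul_left d))
  have hcorr := (tendsto_rpow_mul_of_abs_le (p := -(3 : ℝ) / 4) (by norm_num)
    fun y ↦ Real.abs_cos_le_one (oscPhase k φ y)).ofReal.const_mul d
  exact ⟨L, by simpa using hL.sub hcorr⟩

lemma exists_hasLogPrimitive (hv : HasOscillatingTail β v) (hc : Continuous v) :
    ∃ L, HasLogPrimitive β v atTop L :=
  (hv.exists_tendsto_integral_sub_log hc).imp fun _ hL ↦ ⟨hv.tendsto_zero, hL⟩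

lemma exists_hasLogPrimitive_atBot (hv : HasOscillatingTail (-α) fun y ↦ u (-y))
    (hu : Continuous u) : ∃ L, HasLogPrimitive α u atBot L :=
  (hv.exists_hasLogPrimitive (hu.comp continuous_neg)).imp' Neg.neg
    fun _ ↦ HasLogPrimitive.of_comp_neg

lemma of_zpow_expansion {γ δ : ℂ} {x₀ K : ℝ} (hK : ∀ x : ℝ, x₀ ≤ x →
      ‖v x - β / x - γ * (x : ℂ) ^ (-4 : ℤ) - δ * (x : ℂ) ^ (-7 : ℤ)‖ ≤ K * x ^ (-10 : ℤ)) :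
    HasOscillatingTail β v := by
  have hrem : (fun x : ℝ ↦ v x - β / x - γ * (x : ℂ) ^ (-4 : ℤ) - δ * (x : ℂ) ^ (-7 : ℤ)) =O[atTop]
      fun x : ℝ ↦ (x : ℂ) ^ (-10 : ℤ) := by
    refine IsBigO.of_bound K ?_
    filter_upwards [eventually_ge_atTop x₀, eventually_ge_atTop 0] with x hx hx₀
    simpa [abs_of_nonneg hx₀] using hK x hx
  have hsum := ((hrem.trans (isBigO_zpow_rpow_atTop (by norm_num))).add
    ((isBigO_zpow_rpow_atTop (p := -7 / 4) (n := -7) (by norm_num)).const_mul_left δ)).add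
      ((isBigO_zpow_rpow_atTop (p := -7 / 4) (n := -4) (by norm_num)).const_mul_left γ)
  exact ⟨0, 0, 0, by simpa using hsum⟩

lemma of_sin_expansion {d : ℂ} (hd : d.re = 0) {φ x₁ K : ℝ} (hK : ∀ x : ℝ, x ≤ -x₁ →
      ‖u x - α / x - d * (((-x) ^ (-(1 : ℝ) / 4) : ℝ) : ℂ) *
        Complex.sin (((2 / 3 * (-x) ^ ((3 : ℝ) / 2) : ℝ) : ℂ) -
          3 / 4 * d ^ 2 * (Real.log (-x) : ℂ) + (φ : ℂ))‖ ≤ K * (-x) ^ (-(7 : ℝ) / 4)) :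
    HasOscillatingTail (-α) fun y ↦ u (-y) := by
  -- The phase is real because `d` is purely imaginary.
  have hphase (y : ℝ) : (oscPhase (3 / 4 * d.im ^ 2) φ y : ℂ) =
      ((2 / 3 * y ^ ((3 : ℝ) / 2) : ℝ) : ℂ) - 3 / 4 * d ^ 2 * (Real.log y : ℂ) + φ := by
    have hd_sq : d ^ 2 = -(d.im : ℂ) ^ 2 := by
      rw [← Complex.re_add_im d, hd]
      simp [mul_pow]
    rw [oscPhase, hd_sq]
    push_cast
    ring
  refine ⟨d, 3 / 4 * d.im ^ 2, φ, IsBigO.of_bound K ?_⟩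
  filter_upwards [eventually_ge_atTop x₁, eventually_ge_atTop 0] with y hy hy₀
  have hbound := hK (-y) (neg_le_neg hy)
  rw [neg_neg, ← hphase, Complex.ofReal_neg, div_neg, mul_assoc, ← Complex.ofReal_sin,
    ← Complex.ofReal_mul, ← neg_div] at hbound
  rwa [Real.norm_of_nonneg (Real.rpow_nonneg hy₀ _)]

end HasOscillatingTail

theorem stmt_18_general {μ α : ℂ} (hμ : 1 - Complex.I * μ ≠ 0) (hα : α = -Complex.I * μ / 2)
    {u : ℝ → ℂ} (hu : IsPainleveTwo α u)
    (hp : ∃ L, HasLogPrimitive α u atTop L) (hm : ∃ L, HasLogPrimitive α u atBot L)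
    {c : ℝ} (hc : 0 < c) (C : ℂ)
    (hC : C = 2 * c / (1 - Complex.I * μ) * (deriv u 0 - u 0 ^ 2)) (w : ℝ → ℂ)
    (hw : ∀ x : ℝ, w x = (∫ y in (0 : ℝ)..x,
      Complex.exp ((2 / c : ℝ) * ∫ z in (0 : ℝ)..y, u (z / c))) - C)
    (g : ℝ → ℂ)
    (hg : ∀ x : ℝ, x ≠ 0 → g x = Complex.exp (Complex.I * μ * Real.log |x|) * w x / x) :
    ∃ gp gm : ℂ, gp ≠ 0 ∧ gm ≠ 0 ∧ Tendsto g atTop (𝓝 gp) ∧ Tendsto g atBot (𝓝 gm) ∧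
      ∃ L : ℂ, Tendsto (fun x : ℝ ↦ Complex.exp (2 * ∫ y in (-x)..x, u y)) atTop (𝓝 L) ∧
        gp / gm = L := by
  obtain ⟨Lp, hp⟩ := hp
  obtain ⟨Lm, hm⟩ := hm
  have hμα : Complex.I * μ = -(2 * α) := by rw [hα]; ring
  rw [hμα, sub_neg_eq_add] at hμ hC
  have hg_eq {x : ℝ} (hx : x ≠ 0) : normalizedPrimitive α c u x = g x := by
    rw [hg x hx, hw, hC, hμα, normalizedPrimitive, miura]
  have hA : Complex.exp (-(2 * α) * Real.log c) / (1 + 2 * α) ≠ 0 :=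
    div_ne_zero (Complex.exp_ne_zero _) hμ
  have hu₀ := hp.tendsto_cobounded hm
  refine ⟨_, _, mul_ne_zero hA (Complex.exp_ne_zero (2 * Lp)),
    mul_ne_zero hA (Complex.exp_ne_zero (2 * Lm)),
    (hu.tendsto_normalizedPrimitive hμ hu₀ hc IsOrderBornology.atTop_le_cobounded
      (tendsto_id.atTop_div_const hc) hp).congr' ((eventually_ne_atTop 0).mono fun _ ↦ hg_eq),
    (hu.tendsto_normalizedPrimitive hμ hu₀ hc IsOrderBornology.atBot_le_cobounded
      (tendsto_id.atBot_div_const hc) hm).congr' ((eventually_ne_atBot 0).mono fun _ ↦ hg_eq),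
    Complex.exp (2 * (Lp - Lm)),
    ((hp.tendsto_integral_neg_self hu.contDiff.continuous hm).const_mul 2).cexp, ?_⟩
  rw [mul_div_mul_left _ _ hA, ← Complex.exp_sub, mul_sub]

/-- The limits `g₊ = lim_{x→+∞} g(x)` and `g₋ = lim_{x→-∞} g(x)` exist, are nonzero,
the limit `lim_{x→+∞} exp(2 ∫_{-x}^x u)` exists, and `g₊/g₋` equals that limit. -/
theorem stmt_18 (μ : ℝ) (α : ℂ) (hα : α = -Complex.I * μ / 2)
    (u : ℝ → ℂ) (hu : ContDiff ℝ (⊤ : ℕ∞) u)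
    (hP : ∀ x : ℝ, deriv (deriv u) x = (x : ℂ) * u x + 2 * (u x) ^ 3 - α)
    (him : ∀ x : ℝ, (u x).re = 0)
    (hAp : ∃ x₀ : ℝ, 0 < x₀ ∧ ∃ K : ℝ, 0 < K ∧ ∀ x : ℝ, x₀ ≤ x →
      ‖u x - α / x - 2 * α * (1 - α ^ 2) * (x : ℂ) ^ (-4 : ℤ)
        - 4 * α * (1 - α ^ 2) * (10 - 3 * α ^ 2) * (x : ℂ) ^ (-7 : ℤ)‖
        ≤ K * x ^ (-10 : ℤ))
    (hAm : ∃ d : ℂ, d.re = 0 ∧ ∃ φ : ℝ, ∃ x₁ : ℝ, 0 < x₁ ∧ ∃ K' : ℝ, 0 < K' ∧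
      ∀ x : ℝ, x ≤ -x₁ →
        ‖u x - α / x - d * (((-x) ^ (-(1:ℝ)/4) : ℝ) : ℂ) *
          Complex.sin (((2/3 * (-x) ^ ((3:ℝ)/2) : ℝ) : ℂ)
            - 3/4 * d ^ 2 * (Real.log (-x) : ℂ) + (φ : ℂ))‖
          ≤ K' * (-x) ^ (-(7:ℝ)/4))
    (Cc : ℂ)
    (hC : Cc = (2 * cbrt3 / (1 - Complex.I * μ)) * (deriv u 0 - (u 0) ^ 2))
    (w : ℝ → ℂ)
    (hw : ∀ x : ℝ, w x =
      (∫ y in (0:ℝ)..x, Complex.exp (((2 / cbrt3 : ℝ) : ℂ) *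
        ∫ z in (0:ℝ)..y, u (z / cbrt3))) - Cc)
    (g : ℝ → ℂ)
    (hg : ∀ x : ℝ, x ≠ 0 →
      g x = Complex.exp (Complex.I * μ * Real.log |x|) * w x / x) :
    ∃ gp gm : ℂ, gp ≠ 0 ∧ gm ≠ 0 ∧
      Filter.Tendsto g Filter.atTop (nhds gp) ∧
      Filter.Tendsto g Filter.atBot (nhds gm) ∧
      ∃ L : ℂ,
        Filter.Tendsto (fun x : ℝ => Complex.exp (2 * ∫ y in (-x)..x, u y))
          Filter.atTop (nhds L) ∧
        gp / gm = L := by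
  obtain ⟨x₀, -, K, -, hK⟩ := hAp
  obtain ⟨d, hd, φ, x₁, -, K', -, hK'⟩ := hAm
  exact stmt_18_general (fun h ↦ by simpa using congrArg Complex.re h) hα
    ⟨mod_cast contDiff_infty.1 hu 2, hP⟩
    ((HasOscillatingTail.of_zpow_expansion hK).exists_hasLogPrimitive hu.continuous)
    ((HasOscillatingTail.of_sin_expansion hd hK').exists_hasLogPrimitive_atBot hu.continuous)
    (Real.rpow_pos_of_pos three_pos _) Cc hC w hw g hg
end
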